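/- arXiv:1305.4719 — 2 statements merged into one kernel-verified Lean document; each statement's English description precedes it below -/
import Mathlib

section
/- Limit of the Gaussian-averaged double integral (display (ExpAsyJ332)): lim_{t→0⁺} t^{−1}·∫₀^∞ ( ∫₀^∞ (e^{−x} − 1)·P( U − V ≥ t^{1/2−1/Y}·w and M*·U + G*·V ≤ t^{−1/Y}·x ≤ M·U + G·V ) dx )·e^{√t·w}·(e^{−w²/(2σ²)}/√(2πσ²)) dw = −(C·Γ(−Y)/2)·(M^Y − (M−1)^Y). -/
open MeasureTheory ProbabilityTheory Filter Topology Set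

lemma gamma_int (s b : ℝ) (hs : 0 < s) (hb : 0 < b) :
    IntegrableOn (fun x : ℝ => x ^ (s-1) * Real.exp (-b * x)) (Ioi 0) := by
  have := integrableOn_rpow_mul_exp_neg_mul_rpow (p := 1) (s := s-1) (b := b) (by linarith) one_pos hb
  simpa using this

lemma gamma_int_c (s : ℝ) (r : ℂ) (hs : 0 < s) (hb : 0 < r.re) :
    IntegrableOn (fun x : ℝ => ((x ^ (s-1) : ℝ) : ℂ) * Complex.exp (-r * x)) (Ioi 0) := by
  refine (gamma_int s r.re hs hb).mono' ?_ ?_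
  · refine Measurable.aestronglyMeasurable ?_
    fun_prop
  · filter_upwards [ae_restrict_mem measurableSet_Ioi] with x hx
    rw [norm_mul, Complex.norm_real, Complex.norm_exp, Real.norm_of_nonneg (Real.rpow_nonneg (le_of_lt hx) _)]
    simp

lemma gamma_diff (s : ℝ) (hs : 0 < s) (r : ℂ) (hr : 0 < r.re) :
    DifferentiableAt ℂ (fun r : ℂ => ∫ x in Ioi (0:ℝ), ((x ^ (s-1) : ℝ) : ℂ) * Complex.exp (-r * x)) r := by
  have hn : {z : ℂ | r.re / 2 < z.re} ∈ 𝓝 r :=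
    (isOpen_lt continuous_const Complex.continuous_re).mem_nhds (by simp; linarith)
  have := hasDerivAt_integral_of_dominated_loc_of_deriv_le (μ := volume.restrict (Ioi (0:ℝ)))
    (F := fun (r : ℂ) (x : ℝ) => ((x ^ (s-1) : ℝ) : ℂ) * Complex.exp (-r * x))
    (F' := fun (r : ℂ) (x : ℝ) => ((x ^ (s-1) : ℝ) : ℂ) * (Complex.exp (-r * x) * (-x)))
    (x₀ := r) (bound := fun x => x ^ (s + 1 - 1) * Real.exp (-(r.re/2) * x)) hn
    (Eventually.of_forall fun z => Measurable.aestronglyMeasurable (by fun_prop))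
    (gamma_int_c s r hs hr) (Measurable.aestronglyMeasurable (by fun_prop)) ?_
    (gamma_int (s+1) (r.re/2) (by linarith) (by linarith)) ?_
  · exact this.2.differentiableAt
  · filter_upwards [ae_restrict_mem measurableSet_Ioi] with x hx z hz
    have hx' : 0 < x := hx
    rw [norm_mul, norm_mul, norm_neg, Complex.norm_real, Complex.norm_real, Complex.norm_exp,
      Real.norm_of_nonneg (Real.rpow_nonneg hx'.le _), Real.norm_of_nonneg hx'.le,
      show s + 1 - 1 = (s - 1) + 1 by ring, Real.rpow_add_one hx'.ne', mul_comm _ x, ← mul_assoc]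
    have : (-z * x).re ≤ -(r.re/2) * x := by
      have hz' : r.re / 2 < z.re := hz
      simp
      gcongr
    gcongr
  · refine ae_of_all _ fun x z _ => ?_
    refine HasDerivAt.const_mul _ ?_
    refine HasDerivAt.cexp ?_
    have := ((hasDerivAt_id z).neg).mul_const (x : ℂ)
    simpa using this

lemma gamma_complex (s : ℝ) (hs : 0 < s) (r : ℂ) (hr : 0 < r.re) :
    ∫ x in Ioi (0:ℝ), ((x ^ (s-1) : ℝ) : ℂ) * Complex.exp (-r * x) = Real.Gamma s * r ^ (-s : ℂ) := by
  have hopen : IsOpen {z : ℂ | 0 < z.re} := isOpen_lt continuous_const Complex.continuous_re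
  have h1 : AnalyticOnNhd ℂ (fun r : ℂ => ∫ x in Ioi (0:ℝ), ((x ^ (s-1) : ℝ) : ℂ) * Complex.exp (-r * x)) {z : ℂ | 0 < z.re} :=
    DifferentiableOn.analyticOnNhd (fun z hz => (gamma_diff s hs z hz).differentiableWithinAt) hopen
  have h2 : AnalyticOnNhd ℂ (fun r : ℂ => (Real.Gamma s : ℂ) * r ^ (-s : ℂ)) {z : ℂ | 0 < z.re} := by
    refine DifferentiableOn.analyticOnNhd (fun z hz => DifferentiableAt.differentiableWithinAt ?_) hopen
    exact (DifferentiableAt.cpow_const differentiableAt_id (Or.inl hz)).const_mul _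
  refine AnalyticOnNhd.eqOn_of_preconnected_of_frequently_eq h1 h2 (convex_halfSpace_re_gt 0).isPreconnected
    (z₀ := 1) (by simp) ?_ hr
  have ht : Tendsto (fun n : ℕ => ((1 + 1 / ((n:ℝ) + 1) : ℝ) : ℂ)) atTop (𝓝[≠] 1) := by
    rw [tendsto_nhdsWithin_iff]
    constructor
    · have := (tendsto_one_div_add_atTop_nhds_zero_nat (𝕜 := ℝ)).const_add 1
      rw [add_zero] at this
      have h := (Complex.continuous_ofReal.tendsto 1).comp this
      rw [Complex.ofReal_one] at h
      exact h
    · refine Eventually.of_forall fun n => ?_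
      have : (0:ℝ) < 1 / ((n:ℝ) + 1) := by positivity
      intro h
      have h' : ((1 + 1 / ((n:ℝ) + 1) : ℝ) : ℂ) = ((1:ℝ):ℂ) := by simpa using h
      rw [Complex.ofReal_inj] at h'
      linarith
  refine ht.frequently (Frequently.of_forall fun n => ?_)
  set b : ℝ := 1 + 1 / ((n:ℝ) + 1) with hb
  have hb0 : 0 < b := by positivity
  have := Real.integral_rpow_mul_exp_neg_mul_Ioi hs hb0
  rw [one_div, Real.inv_rpow hb0.le, ← Real.rpow_neg hb0.le, mul_comm] at this
  rw [← Complex.ofReal_neg s, ← Complex.ofReal_cpow hb0.le, ← Complex.ofReal_mul, ← this, ← integral_complex_ofReal]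
  congr 1; ext x; push_cast; simp

noncomputable def fm (m : ℕ) (x : ℝ) : ℝ := max x 0 ^ m * Real.exp (-max x 0)

lemma fm_cont (m : ℕ) : Continuous (fm m) := by unfold fm; fun_prop

lemma fm_eq_ind (m : ℕ) (hm : 1 ≤ m) : fm m = (Ioi (0:ℝ)).indicator (fun x => x ^ m * Real.exp (-x)) := by
  ext x
  by_cases hx : 0 < x
  · simp [fm, hx, max_eq_left hx.le]
  · rw [indicator_of_notMem (by simpa using hx), fm, max_eq_right (not_lt.1 hx)]
    simp; omega

lemma fm_int (m : ℕ) (hm : 1 ≤ m) : Integrable (fm m) := by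
  rw [fm_eq_ind m hm, integrable_indicator_iff measurableSet_Ioi]
  refine (Real.GammaIntegral_convergent (s := m + 1) (by positivity)).congr_fun (fun x hx => ?_) measurableSet_Ioi
  simp [mul_comm]

lemma one_add_ne (u : ℝ) : (1 + Complex.I * u : ℂ) ≠ 0 := by
  intro h
  have := congrArg Complex.re h
  simp at this

lemma norm_sq_one_add (u : ℝ) : ‖(1 + Complex.I * u : ℂ)‖ ^ 2 = 1 + u ^ 2 := by
  rw [Complex.sq_norm, Complex.normSq_apply]; simp; ring

lemma norm_one_add (u : ℝ) : ‖(1 + Complex.I * u : ℂ)‖ = (1 + u ^ 2) ^ ((1:ℝ)/2) := by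
  rw [← norm_sq_one_add, ← Real.sqrt_eq_rpow, Real.sqrt_sq (norm_nonneg _)]

lemma int_inv_pow (m : ℕ) (hm : 1 ≤ m) : Integrable (fun u : ℝ => ((1 + Complex.I * u : ℂ) ^ (m+1))⁻¹) := by
  have h := integrable_inv_one_add_sq
  refine h.mono' ?_ ?_
  · refine Continuous.aestronglyMeasurable ?_
    exact Continuous.inv₀ (by fun_prop) (fun u => pow_ne_zero _ (one_add_ne u))
  · refine ae_of_all _ (fun u => ?_)
    rw [norm_inv, norm_pow]
    gcongr
    rw [← norm_sq_one_add]
    apply pow_le_pow_right₀ _ (by omega)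
    have := norm_sq_one_add u
    nlinarith [norm_nonneg (1 + Complex.I * u : ℂ), sq_nonneg u]

open FourierTransform in
lemma fourier_fm (m : ℕ) (hm : 1 ≤ m) (ξ : ℝ) :
    𝓕 (fun x => (fm m x : ℂ)) ξ = (m.factorial : ℂ) * ((1 + Complex.I * (2 * Real.pi * ξ : ℝ) : ℂ) ^ (m+1))⁻¹ := by
  rw [Real.fourier_real_eq_integral_exp_smul]
  have := gamma_complex (m + 1) (by positivity) (1 + Complex.I * (2 * Real.pi * ξ : ℝ)) (by simp)
  rw [Real.Gamma_nat_eq_factorial] at this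
  rw [fm_eq_ind m hm]
  calc _ = ∫ x in Ioi (0:ℝ), ((x ^ ((m:ℝ) + 1 - 1) : ℝ) : ℂ) * Complex.exp (-(1 + Complex.I * (2 * Real.pi * ξ : ℝ)) * x) := by
        rw [← integral_indicator measurableSet_Ioi]
        congr 1; ext x
        by_cases hx : 0 < x
        · rw [indicator_of_mem (by simpa using hx), indicator_of_mem (by simpa using hx)]
          simp only [add_sub_cancel_right, Real.rpow_natCast]
          push_cast
          rw [smul_eq_mul, mul_comm, mul_assoc, ← Complex.exp_add]
          congr 2
          ring
        · rw [indicator_of_notMem (by simpa using hx), indicator_of_notMem (by simpa using hx)]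
          simp
    _ = _ := by
      rw [this]
      congr 1
      rw [Complex.cpow_neg]
      push_cast
      rw [← Nat.cast_succ, Complex.cpow_natCast]

open FourierTransform in
lemma fourier_rep (m : ℕ) (hm : 1 ≤ m) (x : ℝ) :
    ∫ u : ℝ, Complex.exp (Complex.I * u * x) * ((1 + Complex.I * u : ℂ) ^ (m+1))⁻¹ = 2 * Real.pi / (m.factorial : ℂ) * (fm m x : ℂ) := by
  have hc : Continuous (fun x => (fm m x : ℂ)) := Complex.continuous_ofReal.comp (fm_cont m)
  have hi : Integrable (fun x => (fm m x : ℂ)) := (fm_int m hm).ofReal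
  have h2 : Integrable (𝓕 (fun x => (fm m x : ℂ))) := by
    rw [show 𝓕 (fun x => (fm m x : ℂ)) = fun ξ => _ from funext (fourier_fm m hm)]
    exact ((int_inv_pow m hm).comp_mul_left' (g := fun u : ℝ => ((1 + Complex.I * u : ℂ) ^ (m+1))⁻¹) (R := 2 * Real.pi) (by positivity)).const_mul _
  have h := congrFun (hc.fourierInv_fourier_eq hi h2) x
  rw [Real.fourierInv_eq'] at h
  simp_rw [fourier_fm m hm] at h
  have key := Measure.integral_comp_mul_left (fun u : ℝ => Complex.exp (Complex.I * u * x) * ((1 + Complex.I * u : ℂ) ^ (m+1))⁻¹) (2 * Real.pi)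
  have e : (fm m x : ℂ) = (m.factorial : ℂ) * ∫ (ξ : ℝ), (fun u : ℝ => Complex.exp (Complex.I * u * x) * ((1 + Complex.I * u : ℂ) ^ (m+1))⁻¹) (2 * Real.pi * ξ) := by
    rw [← h, ← integral_const_mul]
    congr 1; ext ξ
    simp only [smul_eq_mul]
    rw [mul_left_comm]
    congr 2
    simp
    ring_nf
  rw [key] at e
  rw [e, abs_of_pos (by positivity)]
  have : (m.factorial : ℂ) ≠ 0 := by exact_mod_cast m.factorial_ne_zero
  have : (Real.pi : ℂ) ≠ 0 := by exact_mod_cast Real.pi_ne_zero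
  rw [Complex.real_smul]
  push_cast
  field_simp
  congr 1; ext u; ring_nf

lemma norm_inv_pow4 (u : ℝ) : ‖((1 + Complex.I * u : ℂ) ^ 4)⁻¹‖ = (1 + u ^ 2) ^ (-2 : ℝ) := by
  rw [norm_inv, norm_pow, show (4:ℕ) = 2 * 2 by rfl, pow_mul, norm_sq_one_add, Real.rpow_neg (by positivity)]
  norm_num

lemma bound_int (Y : ℝ) (hY : Y ∈ Set.Ioo (1:ℝ) 2) :
    Integrable (fun u : ℝ => |u| ^ Y * ‖((1 + Complex.I * u : ℂ) ^ 4)⁻¹‖) := by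
  have h := integrable_rpow_neg_one_add_norm_sq (E := ℝ) (μ := volume) (r := 4 - Y) (by simp; linarith [hY.2])
  refine h.mono' ?_ ?_
  · refine Measurable.aestronglyMeasurable ?_
    fun_prop
  · refine ae_of_all _ fun u => ?_
    rw [norm_inv_pow4, Real.norm_of_nonneg (by positivity)]
    have h1 : |u| ^ Y ≤ (1 + u ^ 2) ^ (Y / 2) := by
      have : |u| ≤ (1 + u ^ 2) ^ ((1:ℝ)/2) := by
        rw [← Real.sqrt_eq_rpow]
        exact Real.abs_le_sqrt (by linarith)
      calc |u| ^ Y ≤ ((1 + u ^ 2) ^ ((1:ℝ)/2)) ^ Y :=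
            Real.rpow_le_rpow (abs_nonneg _) this (by linarith [hY.1])
        _ = _ := by rw [← Real.rpow_mul (by positivity)]; congr 1; ring
    calc |u| ^ Y * (1 + u ^ 2) ^ (-2 : ℝ) ≤ (1 + u ^ 2) ^ (Y / 2) * (1 + u ^ 2) ^ (-2 : ℝ) := by gcongr
      _ = (1 + ‖u‖ ^ 2) ^ (-(4 - Y) / 2) := by
        rw [← Real.rpow_add (by positivity), Real.norm_eq_abs, sq_abs]; congr 1; ring

lemma slit (ε u : ℝ) (hε : 0 < ε) : (ε - Complex.I * u : ℂ) ∈ Complex.slitPlane := by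
  left; simp [hε]

lemma cpow_cont (ε s : ℝ) (hε : 0 < ε) : Continuous (fun u : ℝ => (ε - Complex.I * u : ℂ) ^ (-s : ℂ)) := by
  rw [continuous_iff_continuousAt]
  intro u
  exact ContinuousAt.cpow (by fun_prop) continuousAt_const (slit ε u hε)

lemma D_int (m : ℕ) (hm : 1 ≤ m) (s ε : ℝ) (hs : 0 < s) (hε : 0 < ε) :
    Integrable (fun u : ℝ => (ε - Complex.I * u : ℂ) ^ (-s : ℂ) * ((1 + Complex.I * u : ℂ) ^ (m+1))⁻¹) := by
  refine (int_inv_pow m hm).bdd_mul (c := ε ^ (-s)) (cpow_cont ε s hε).aestronglyMeasurable ?_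
  refine ae_of_all _ fun u => ?_
  rw [← Complex.ofReal_neg s, Complex.norm_cpow_real]
  refine Real.rpow_le_rpow_of_nonpos hε ?_ (by linarith)
  have := Complex.re_le_norm (ε - Complex.I * u : ℂ)
  simpa using this

lemma D_eval (m : ℕ) (hm : 1 ≤ m) (s ε : ℝ) (hs : 0 < s) (hε : 0 < ε) :
    ∫ u : ℝ, (ε - Complex.I * u : ℂ) ^ (-s : ℂ) * ((1 + Complex.I * u : ℂ) ^ (m+1))⁻¹ =
      ((2 * Real.pi / m.factorial * (Real.Gamma (s + m) / Real.Gamma s) * (1 + ε) ^ (-(s + m)) : ℝ) : ℂ) := by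
  have hG : Real.Gamma s ≠ 0 := (Real.Gamma_pos_of_pos hs).ne'
  have hGc : (Real.Gamma s : ℂ) ≠ 0 := by exact_mod_cast hG
  have h1 : ∀ u : ℝ, (ε - Complex.I * u : ℂ) ^ (-s : ℂ) * ((1 + Complex.I * u : ℂ) ^ (m+1))⁻¹ =
      (Real.Gamma s : ℂ)⁻¹ * ∫ x in Ioi (0:ℝ), (((x ^ (s-1) * Real.exp (-ε * x) : ℝ) : ℂ) *
        (Complex.exp (Complex.I * u * x) * ((1 + Complex.I * u : ℂ) ^ (m+1))⁻¹)) := by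
    intro u
    have := gamma_complex s hs (ε - Complex.I * u) (by simp [hε])
    rw [eq_inv_mul_iff_mul_eq₀ hGc, ← mul_assoc, ← this, ← integral_mul_const]
    congr 1; ext x
    rw [show -(ε - Complex.I * u : ℂ) * x = ((-ε * x : ℝ) : ℂ) + Complex.I * u * x by push_cast; ring, Complex.exp_add]
    push_cast; ring
  simp_rw [h1]
  rw [integral_const_mul, integral_integral_swap]
  · simp_rw [integral_const_mul, fourier_rep m hm]
    have h2 : ∫ x in Ioi (0:ℝ), ((x ^ (s-1) * Real.exp (-ε * x) : ℝ) : ℂ) * (2 * Real.pi / (m.factorial : ℂ) * (fm m x : ℂ))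
        = ((2 * Real.pi / m.factorial * ∫ x in Ioi (0:ℝ), x ^ (s + m - 1) * Real.exp (-((1+ε) * x)) : ℝ) : ℂ) := by
      rw [← integral_const_mul, ← integral_complex_ofReal]
      refine setIntegral_congr_fun measurableSet_Ioi fun x hx => ?_
      have hx' : 0 < x := hx
      simp only [fm, max_eq_left hx'.le]
      rw [show s + m - 1 = (s - 1) + m by ring, Real.rpow_add hx', Real.rpow_natCast,
        show -((1+ε) * x) = -ε * x + -x by ring, Real.exp_add]
      push_cast; ring
    rw [h2, Real.integral_rpow_mul_exp_neg_mul_Ioi (by positivity) (by positivity), one_div,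
      Real.inv_rpow (by positivity), ← Real.rpow_neg (by positivity)]
    push_cast
    field_simp
  · have := Integrable.mul_prod (int_inv_pow m hm) ((gamma_int s ε hs hε).ofReal (𝕜 := ℂ))
    have h3 := this.bdd_mul (c := 1) (f := fun z : ℝ × ℝ => Complex.exp (Complex.I * z.1 * z.2)) (Measurable.aestronglyMeasurable (by fun_prop)) (ae_of_all _ fun z => by
      rw [Complex.norm_exp]; simp)
    refine h3.congr (ae_of_all _ fun z => ?_)
    simp only [Function.uncurry]
    push_cast
    simp
    ring

lemma chi_lim (Y u : ℝ) (hu : u ≠ 0) :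
    (-Complex.I * u : ℂ) ^ (-(2 - Y : ℝ) : ℂ) * (Complex.I * u) ^ 2 =
      ((|u| ^ Y : ℝ) : ℂ) * (((Real.cos (Real.pi * Y / 2) : ℝ) : ℂ)
          - Complex.I * ((Real.sign u : ℝ) : ℂ) * ((Real.sin (Real.pi * Y / 2) : ℝ) : ℂ)) := by
  have key : ∀ v : ℝ, 0 < v → ∀ e : ℝ, (e = 1 ∨ e = -1) → (-Complex.I * (e * v : ℝ) : ℂ) ^ (-(2 - Y : ℝ) : ℂ) * (Complex.I * (e * v : ℝ)) ^ 2 =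
      ((v ^ Y : ℝ) : ℂ) * (((Real.cos (Real.pi * Y / 2) : ℝ) : ℂ)
          - Complex.I * (e : ℂ) * ((Real.sin (Real.pi * Y / 2) : ℝ) : ℂ)) := by
    intro v hv e he
    have hne : (-Complex.I * (e * v : ℝ) : ℂ) ≠ 0 := by
      rcases he with rfl | rfl <;> simp [hv.ne']
    have hlog : Complex.log (-Complex.I * (e * v : ℝ)) = Real.log v + ((-e * (Real.pi / 2) : ℝ) : ℂ) * Complex.I := by
      have : (-Complex.I * (e * v : ℝ) : ℂ) = v * (-e * Complex.I) := by push_cast; ring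
      rw [this, Complex.log_ofReal_mul hv (by rcases he with rfl | rfl <;> simp)]
      congr 1
      rcases he with rfl | rfl
      · simp [Complex.log_neg_I]; 
      · simp [Complex.log_I]
    rw [Complex.cpow_def_of_ne_zero hne, hlog]
    have h2 : (Real.log v + ((-e * (Real.pi / 2) : ℝ) : ℂ) * Complex.I) * (-(2 - Y : ℝ) : ℂ) =
       ((Real.log v * (Y - 2) : ℝ) : ℂ) + ((-e * (Real.pi * Y / 2) : ℝ) * Complex.I + (e * Real.pi : ℝ) * Complex.I) := by
      push_cast; ring
    rw [h2, Complex.exp_add, Complex.exp_add, ← Complex.ofReal_exp, mul_comm (Real.log v), mul_comm (Y-2), ← Real.rpow_def_of_pos hv]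
    have h3 : Complex.exp ((e * Real.pi : ℝ) * Complex.I) = -1 := by
      rcases he with rfl | rfl
      · simp [Complex.exp_pi_mul_I]
      · simp [Complex.exp_neg, Complex.exp_pi_mul_I]
    rw [h3, Complex.exp_mul_I, ← Complex.ofReal_cos, ← Complex.ofReal_sin]
    have h4 : Real.cos (-e * (Real.pi * Y / 2)) = Real.cos (Real.pi * Y / 2) := by
      rcases he with rfl | rfl <;> simp
    have h5 : Real.sin (-e * (Real.pi * Y / 2)) = - e * Real.sin (Real.pi * Y / 2) := by
      rcases he with rfl | rfl <;> simp
    have h6 : v ^ Y = v ^ (Y - 2) * v ^ 2 := by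
      rw [← Real.rpow_natCast v 2, ← Real.rpow_add hv]; congr 1; simp
    have h7 : (e:ℂ) ^ 2 = 1 := by rcases he with rfl | rfl <;> simp
    rw [h4, h5, h6]
    push_cast
    rw [mul_pow, mul_pow, h7, Complex.I_sq]
    ring
  rcases lt_or_gt_of_ne hu with h | h
  · have := key (-u) (by linarith) (-1) (Or.inr rfl)
    rw [Real.sign_of_neg h, abs_of_neg h]
    simpa using this
  · have := key u h 1 (Or.inl rfl)
    rw [Real.sign_of_pos h, abs_of_pos h]
    simpa using this

noncomputable def chi (Y u : ℝ) : ℂ := ((|u| ^ Y : ℝ) : ℂ) * (((Real.cos (Real.pi * Y / 2) : ℝ) : ℂ)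
          - Complex.I * ((Real.sign u : ℝ) : ℂ) * ((Real.sin (Real.pi * Y / 2) : ℝ) : ℂ))

lemma chi_int (Y : ℝ) (hY : Y ∈ Set.Ioo (1:ℝ) 2) :
    ∫ u : ℝ, chi Y u * ((1 + Complex.I * u : ℂ) ^ 4)⁻¹ = ((2 * Real.pi / 6 * (Y * (Y - 1) * (2 - Y)) : ℝ) : ℂ) := by
  obtain ⟨s, hs⟩ : ∃ s : ℝ, s = 2 - Y := ⟨_, rfl⟩
  have hs0 : 0 < s := by simp [hs]; exact hY.2
  have hev : ∀ ε : ℝ, 0 < ε → ∫ u : ℝ, (ε - Complex.I * u : ℂ) ^ (-s : ℂ) * (Complex.I * u) ^ 2 * ((1 + Complex.I * u : ℂ) ^ 4)⁻¹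
      = ((2 * Real.pi / Nat.factorial 1 * (Real.Gamma (s + (1:ℕ)) / Real.Gamma s) * (1 + ε) ^ (-(s + (1:ℕ))) -
        2 * (2 * Real.pi / Nat.factorial 2 * (Real.Gamma (s + (2:ℕ)) / Real.Gamma s) * (1 + ε) ^ (-(s + (2:ℕ)))) +
        (2 * Real.pi / Nat.factorial 3 * (Real.Gamma (s + (3:ℕ)) / Real.Gamma s) * (1 + ε) ^ (-(s + (3:ℕ)))) : ℝ) : ℂ) := by
    intro ε hε
    have i1 := D_int 1 le_rfl s ε hs0 hε
    have i2 := D_int 2 (by norm_num) s ε hs0 hε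
    have i3 := D_int 3 (by norm_num) s ε hs0 hε
    have e1 := D_eval 1 le_rfl s ε hs0 hε
    have e2 := D_eval 2 (by norm_num) s ε hs0 hε
    have e3 := D_eval 3 (by norm_num) s ε hs0 hε
    rw [Complex.ofReal_add, Complex.ofReal_sub, Complex.ofReal_mul 2 (_ * _ * _), ← e1, ← e2, ← e3, ← integral_const_mul, ← integral_sub i1 (i2.const_mul _)]
    refine Eq.trans ?_ (integral_add (i1.sub (i2.const_mul _)) i3)
    congr 1; ext u
    have := one_add_ne u
    push_cast
    field_simp
    ring
  have hlimL : Tendsto (fun ε : ℝ => ∫ u : ℝ, (ε - Complex.I * u : ℂ) ^ (-s : ℂ) * (Complex.I * u) ^ 2 * ((1 + Complex.I * u : ℂ) ^ 4)⁻¹)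
      (𝓝[>] 0) (𝓝 (∫ u : ℝ, chi Y u * ((1 + Complex.I * u : ℂ) ^ 4)⁻¹)) := by
    refine tendsto_integral_filter_of_dominated_convergence _ ?_ ?_ (bound_int Y hY) ?_
    · filter_upwards [self_mem_nhdsWithin] with ε hε
      exact (((cpow_cont ε s hε).mul (by fun_prop)).mul (Continuous.inv₀ (by fun_prop) (fun u => pow_ne_zero _ (one_add_ne u)))).aestronglyMeasurable
    · filter_upwards [self_mem_nhdsWithin] with ε hε
      have h0 : ∀ᵐ u : ℝ, u ≠ 0 := by simp [ae_iff, measure_singleton]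
      filter_upwards [h0] with u hu
      rw [norm_mul]
      gcongr
      rw [norm_mul, ← Complex.ofReal_neg s, Complex.norm_cpow_real]
      have ha : 0 < |u| := abs_pos.2 hu
      have : |u| ≤ ‖(ε - Complex.I * u : ℂ)‖ := by
        have := Complex.abs_im_le_norm (ε - Complex.I * u : ℂ)
        simpa using this
      calc _ ≤ |u| ^ (-s) * |u| ^ 2 := by
            simp only [norm_pow, norm_mul, Complex.norm_I, Complex.norm_real, one_mul, Real.norm_eq_abs]
            refine mul_le_mul_of_nonneg_right ?_ (by positivity)
            exact Real.rpow_le_rpow_of_nonpos ha this (by linarith)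
        _ = |u| ^ Y := by
            rw [← Real.rpow_natCast _ 2, ← Real.rpow_add ha]; congr 1; simp [hs]
    · have h0 : ∀ᵐ u : ℝ, u ≠ 0 := by simp [ae_iff, measure_singleton]
      filter_upwards [h0] with u hu
      refine Tendsto.mul_const _ ?_
      rw [chi, ← chi_lim Y u hu, ← hs]
      refine Tendsto.mul_const _ ?_
      have : ContinuousAt (fun ε : ℝ => (ε - Complex.I * u : ℂ) ^ (-s : ℂ)) 0 := by
        refine ContinuousAt.cpow (by fun_prop) continuousAt_const ?_
        right; simp [hu]
      have := this.tendsto.mono_left (nhdsWithin_le_nhds (s := Ioi 0))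
      simpa using this
  have hlimR : Tendsto (fun ε : ℝ => ((2 * Real.pi / Nat.factorial 1 * (Real.Gamma (s + (1:ℕ)) / Real.Gamma s) * (1 + ε) ^ (-(s + (1:ℕ))) -
        2 * (2 * Real.pi / Nat.factorial 2 * (Real.Gamma (s + (2:ℕ)) / Real.Gamma s) * (1 + ε) ^ (-(s + (2:ℕ)))) +
        (2 * Real.pi / Nat.factorial 3 * (Real.Gamma (s + (3:ℕ)) / Real.Gamma s) * (1 + ε) ^ (-(s + (3:ℕ)))) : ℝ) : ℂ))
      (𝓝[>] 0) (𝓝 ((2 * Real.pi / 6 * (Y * (Y - 1) * (2 - Y)) : ℝ) : ℂ)) := by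
    have hp : ∀ a : ℝ, Tendsto (fun ε : ℝ => (1 + ε) ^ a) (𝓝[>] 0) (𝓝 1) := by
      intro a
      have : ContinuousAt (fun ε : ℝ => (1 + ε) ^ a) 0 := by
        refine ContinuousAt.rpow_const (by fun_prop) (Or.inl (by simp))
      have := this.tendsto.mono_left (nhdsWithin_le_nhds (s := Ioi 0))
      simpa using this
    refine (Complex.continuous_ofReal.tendsto _).comp ?_
    have := (((hp (-(s + (1:ℕ)))).const_mul (2 * Real.pi / Nat.factorial 1 * (Real.Gamma (s + (1:ℕ)) / Real.Gamma s))).sub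
      (((hp (-(s + (2:ℕ)))).const_mul (2 * Real.pi / Nat.factorial 2 * (Real.Gamma (s + (2:ℕ)) / Real.Gamma s))).const_mul 2)).add
      ((hp (-(s + (3:ℕ)))).const_mul (2 * Real.pi / Nat.factorial 3 * (Real.Gamma (s + (3:ℕ)) / Real.Gamma s)))
    convert this using 2
    have hG : Real.Gamma s ≠ 0 := (Real.Gamma_pos_of_pos hs0).ne'
    have g1 : Real.Gamma (s + (1:ℕ)) = s * Real.Gamma s := by
      rw [Nat.cast_one, Real.Gamma_add_one hs0.ne']
    have g2 : Real.Gamma (s + (2:ℕ)) = (s+1) * (s * Real.Gamma s) := by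
      rw [← g1, show s + (2:ℕ) = (s + (1:ℕ)) + 1 by push_cast; ring, Real.Gamma_add_one (by positivity)]; simp
    have g3 : Real.Gamma (s + (3:ℕ)) = (s+2) * ((s+1) * (s * Real.Gamma s)) := by
      rw [← g2, show s + (3:ℕ) = (s + (2:ℕ)) + 1 by push_cast; ring, Real.Gamma_add_one (by positivity)]; simp
    rw [g1, g2, g3]
    have hYs : Y = 2 - s := by simp [hs]
    rw [hYs]
    simp [Nat.factorial]
    field_simp
    ring
  refine tendsto_nhds_unique hlimL (hlimR.congr' ?_)
  filter_upwards [self_mem_nhdsWithin] with ε hε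
  exact (hev ε hε).symm

lemma norm_exp_sub_one_le' (z : ℂ) (hz : z.re ≤ 0) : ‖Complex.exp z - 1‖ ≤ ‖z‖ := by
  have h := (convex_halfSpace_re_le 0).norm_image_sub_le_of_norm_deriv_le (𝕜 := ℂ) (f := Complex.exp) (C := 1)
    (x := 0) (y := z) (fun x _ => Complex.differentiableAt_exp) (fun x hx => by
      rw [Complex.deriv_exp, Complex.norm_exp]
      exact Real.exp_le_one_iff.2 hx) (by simp) hz
  simpa using h

lemma norm_chi_le (Y u : ℝ) : ‖chi Y u‖ ≤ 2 * |u| ^ Y := by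
  rw [chi, norm_mul, Complex.norm_real, Real.norm_of_nonneg (by positivity), mul_comm]
  gcongr
  refine (norm_sub_le _ _).trans ?_
  rw [norm_mul, norm_mul, Complex.norm_real, Complex.norm_real, Complex.norm_real, Complex.norm_I, one_mul]
  have h1 : ‖Real.cos (Real.pi * Y / 2)‖ ≤ 1 := Real.abs_cos_le_one _
  have h2 : ‖Real.sin (Real.pi * Y / 2)‖ ≤ 1 := Real.abs_sin_le_one _
  have h3 : ‖Real.sign u‖ ≤ 1 := by
    rcases Real.sign_apply_eq u with h | h | h <;> simp [h]
  nlinarith [norm_nonneg (Real.sign u), norm_nonneg (Real.sin (Real.pi * Y / 2))]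

lemma chi_scale (Y r u : ℝ) (hr : 0 < r) : chi Y (r * u) = (r ^ Y : ℝ) * chi Y u := by
  have hs : Real.sign (r * u) = Real.sign u := by
    rcases lt_trichotomy u 0 with h | h | h
    · rw [Real.sign_of_neg h, Real.sign_of_neg (mul_neg_of_pos_of_neg hr h)]
    · simp [h]
    · rw [Real.sign_of_pos h, Real.sign_of_pos (mul_pos hr h)]
  rw [chi, chi, hs, abs_mul, abs_of_pos hr, Real.mul_rpow hr.le (abs_nonneg _)]
  push_cast; ring

lemma chi_meas (Y : ℝ) : Measurable (chi Y) := by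
  have : Measurable Real.sign := by
    unfold Real.sign
    exact Measurable.ite (measurableSet_Iio) measurable_const (Measurable.ite measurableSet_Ioi measurable_const measurable_const)
  unfold chi
  fun_prop

section
variable {Ω : Type} [MeasurableSpace Ω] {P : Measure Ω} [IsProbabilityMeasure P]
  {Y K : ℝ} {U : Ω → ℝ}

lemma fm_bdd (x : ℝ) : ‖fm 3 x‖ ≤ 6 := by
  have h : 0 ≤ max x 0 := le_max_right _ _
  have := Real.pow_div_factorial_le_exp (max x 0) h 3
  rw [fm, Real.exp_neg, Real.norm_of_nonneg (by positivity), ← div_eq_mul_inv, div_le_iff₀ (Real.exp_pos _)]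
  simp [Nat.factorial] at this
  linarith

lemma fm_nonneg (m : ℕ) (x : ℝ) : 0 ≤ fm m x := by
  have h : 0 ≤ max x 0 := le_max_right _ _
  unfold fm; positivity

lemma re_nonpos (hchar : ∀ u : ℝ, ∫ ω, Complex.exp (Complex.I * u * (U ω)) ∂P = Complex.exp (K * chi Y u)) (u : ℝ) :
    (K * chi Y u).re ≤ 0 := by
  have h1 : ‖∫ ω, Complex.exp (Complex.I * u * (U ω)) ∂P‖ ≤ 1 := by
    have := norm_integral_le_of_norm_le_const (μ := P) (f := fun ω => Complex.exp (Complex.I * u * (U ω))) (C := 1)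
      (ae_of_all _ fun ω => by rw [Complex.norm_exp]; simp)
    simpa using this
  rw [hchar, Complex.norm_exp] at h1
  exact Real.exp_le_one_iff.1 h1

lemma E_rep (hU : Measurable U)
    (hchar : ∀ u : ℝ, ∫ ω, Complex.exp (Complex.I * u * (U ω)) ∂P = Complex.exp (K * chi Y u)) (r : ℝ) :
    ∫ u : ℝ, Complex.exp (K * chi Y (r * u)) * ((1 + Complex.I * u : ℂ) ^ 4)⁻¹ =
      2 * Real.pi / 6 * ((∫ ω, fm 3 (r * U ω) ∂P : ℝ) : ℂ) := by
  rw [← integral_complex_ofReal, ← integral_const_mul]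
  have h1 : ∀ ω, 2 * Real.pi / 6 * ((fm 3 (r * U ω) : ℝ) : ℂ) =
      ∫ u : ℝ, Complex.exp (Complex.I * u * (r * U ω : ℝ)) * ((1 + Complex.I * u : ℂ) ^ (3+1))⁻¹ := by
    intro ω
    rw [fourier_rep 3 (by norm_num)]
    simp [Nat.factorial]
  simp_rw [h1]
  rw [integral_integral_swap]
  · congr 1; ext u
    rw [integral_mul_const, ← hchar]
    congr 2; ext ω; push_cast; ring_nf
  · have := Integrable.mul_prod (μ := P) (integrable_const (1:ℂ)) (int_inv_pow 3 (by norm_num))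
    have h3 := this.bdd_mul (c := 1) (f := fun z : Ω × ℝ => Complex.exp (Complex.I * z.2 * (r * U z.1 : ℝ))) (Measurable.aestronglyMeasurable (by fun_prop)) (ae_of_all _ fun z => by
      rw [Complex.norm_exp]; simp)
    refine h3.congr (ae_of_all _ fun z => ?_)
    simp [Function.uncurry]

lemma E_rep2 (hU : Measurable U)
    (hchar : ∀ u : ℝ, ∫ ω, Complex.exp (Complex.I * u * (U ω)) ∂P = Complex.exp (K * chi Y u)) (r : ℝ) (hr : 0 < r) :
    ∫ u : ℝ, (((r ^ (-Y) : ℝ) : ℂ) * (Complex.exp ((r ^ Y : ℝ) * (K * chi Y u)) - 1)) * ((1 + Complex.I * u : ℂ) ^ 4)⁻¹ =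
      ((2 * Real.pi / 6 * (r ^ (-Y) * ∫ ω, fm 3 (r * U ω) ∂P) : ℝ) : ℂ) := by
  have h0 : ∫ u : ℝ, ((1 + Complex.I * u : ℂ) ^ (3+1))⁻¹ = 0 := by
    have := fourier_rep 3 (by norm_num) 0
    simpa [fm] using this
  have h1 := E_rep hU hchar r
  have hi := int_inv_pow 3 (by norm_num)
  have hi2 : Integrable (fun u : ℝ => Complex.exp (K * chi Y (r * u)) * ((1 + Complex.I * u : ℂ) ^ (3+1))⁻¹) := by
    refine hi.bdd_mul (c := 1) (Measurable.aestronglyMeasurable ?_) (ae_of_all _ fun u => ?_)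
    · have := chi_meas Y
      fun_prop
    · rw [Complex.norm_exp]
      exact Real.exp_le_one_iff.2 (re_nonpos hchar _)
  have h2 := integral_sub hi2 hi
  rw [h0, sub_zero, h1] at h2
  calc _ = ((r ^ (-Y) : ℝ) : ℂ) * ∫ u : ℝ, (Complex.exp (K * chi Y (r * u)) * ((1 + Complex.I * u : ℂ) ^ (3+1))⁻¹ - ((1 + Complex.I * u : ℂ) ^ (3+1))⁻¹) := by
        rw [← integral_const_mul]
        congr 1; ext u
        rw [chi_scale Y r u hr, show (K * ((r ^ Y : ℝ) * chi Y u) : ℂ) = (r ^ Y : ℝ) * (K * chi Y u) by ring]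
        ring
    _ = _ := by rw [h2]; push_cast; ring

lemma rpow_neg_mul (Y r : ℝ) (hr : 0 < r) : r ^ (-Y) * r ^ Y = 1 := by
  rw [← Real.rpow_add hr]; simp

lemma integrand_bound
    (hchar : ∀ u : ℝ, ∫ ω, Complex.exp (Complex.I * u * (U ω)) ∂P = Complex.exp (K * chi Y u)) (r : ℝ) (hr : 0 < r) (u : ℝ) :
    ‖(((r ^ (-Y) : ℝ) : ℂ) * (Complex.exp ((r ^ Y : ℝ) * (K * chi Y u)) - 1)) * ((1 + Complex.I * u : ℂ) ^ 4)⁻¹‖ ≤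
      2 * |K| * (|u| ^ Y * ‖((1 + Complex.I * u : ℂ) ^ 4)⁻¹‖) := by
  rw [norm_mul, ← mul_assoc (2 * |K|)]
  refine mul_le_mul_of_nonneg_right ?_ (norm_nonneg _)
  rw [norm_mul, Complex.norm_real, Real.norm_of_nonneg (by positivity)]
  have hre : ((r ^ Y : ℝ) * (K * chi Y u)).re ≤ 0 := by
    rw [Complex.re_ofReal_mul]
    exact mul_nonpos_of_nonneg_of_nonpos (by positivity) (re_nonpos hchar u)
  have h := norm_exp_sub_one_le' _ hre
  rw [norm_mul, norm_mul, Complex.norm_real, Complex.norm_real, Real.norm_of_nonneg (by positivity), Real.norm_eq_abs] at h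
  calc _ ≤ r ^ (-Y) * (r ^ Y * (|K| * ‖chi Y u‖)) := by gcongr
    _ = |K| * ‖chi Y u‖ := by rw [← mul_assoc, rpow_neg_mul Y r hr, one_mul]
    _ ≤ |K| * (2 * |u| ^ Y) := by gcongr; exact norm_chi_le Y u
    _ = _ := by ring

lemma Q_bound (hY : Y ∈ Set.Ioo (1:ℝ) 2)  (hU : Measurable U)
    (hchar : ∀ u : ℝ, ∫ ω, Complex.exp (Complex.I * u * (U ω)) ∂P = Complex.exp (K * chi Y u)) :
    ∃ D : ℝ, ∀ r : ℝ, 0 < r → r ^ (-Y) * ∫ ω, fm 3 (r * U ω) ∂P ≤ D := by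
  refine ⟨6 / (2 * Real.pi) * ∫ u : ℝ, 2 * |K| * (|u| ^ Y * ‖((1 + Complex.I * u : ℂ) ^ 4)⁻¹‖), fun r hr => ?_⟩
  have h := norm_integral_le_of_norm_le ((bound_int Y hY).const_mul (2 * |K|)) (ae_of_all _ (integrand_bound hchar r hr))
  rw [E_rep2 hU hchar r hr, Complex.norm_real] at h
  have h2 := (Real.le_norm_self _).trans h
  have hpi := Real.pi_pos
  calc _ = 6 / (2 * Real.pi) * (2 * Real.pi / 6 * (r ^ (-Y) * ∫ ω, fm 3 (r * U ω) ∂P)) := by field_simp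
    _ ≤ _ := by gcongr

lemma Q_lim (hY : Y ∈ Set.Ioo (1:ℝ) 2)  (hU : Measurable U)
    (hchar : ∀ u : ℝ, ∫ ω, Complex.exp (Complex.I * u * (U ω)) ∂P = Complex.exp (K * chi Y u)) :
    Tendsto (fun r : ℝ => r ^ (-Y) * ∫ ω, fm 3 (r * U ω) ∂P) (𝓝[>] 0) (𝓝 (K * (Y * (Y - 1) * (2 - Y)))) := by
  have h1 : Tendsto (fun r : ℝ => ∫ u : ℝ, (((r ^ (-Y) : ℝ) : ℂ) * (Complex.exp ((r ^ Y : ℝ) * (K * chi Y u)) - 1)) * ((1 + Complex.I * u : ℂ) ^ 4)⁻¹)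
      (𝓝[>] 0) (𝓝 (∫ u : ℝ, (K * chi Y u) * ((1 + Complex.I * u : ℂ) ^ 4)⁻¹)) := by
    refine tendsto_integral_filter_of_dominated_convergence _ ?_ ?_ ((bound_int Y hY).const_mul (2 * |K|)) ?_
    · refine Eventually.of_forall fun r => Measurable.aestronglyMeasurable ?_
      have := chi_meas Y
      fun_prop
    · filter_upwards [self_mem_nhdsWithin] with r hr
      exact ae_of_all _ (integrand_bound hchar r hr)
    · refine ae_of_all _ fun u => Tendsto.mul_const _ ?_
      generalize (K * chi Y u : ℂ) = z
      have hd : HasDerivAt (fun x : ℝ => Complex.exp (x * z)) z 0 := by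
        have h := ((Complex.ofRealCLM.hasDerivAt (x := 0)).mul_const z).cexp
        simpa using h
      have hs := hd.tendsto_slope_zero_right
      have hr : Tendsto (fun r : ℝ => r ^ Y) (𝓝[>] 0) (𝓝[>] 0) := by
        rw [tendsto_nhdsWithin_iff]
        constructor
        · have : ContinuousAt (fun r : ℝ => r ^ Y) 0 := Real.continuousAt_rpow_const _ _ (Or.inr (by linarith [hY.1]))
          have := this.tendsto.mono_left (nhdsWithin_le_nhds (s := Ioi 0))
          rwa [Real.zero_rpow (by linarith [hY.1])] at this
        · filter_upwards [self_mem_nhdsWithin] with r hr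
          exact Real.rpow_pos_of_pos hr _
      refine (hs.comp hr).congr' ?_
      filter_upwards [self_mem_nhdsWithin] with r hr
      have hr' : 0 < r := hr
      simp [Real.rpow_neg hr'.le]
  have h2 : ∫ u : ℝ, (K * chi Y u) * ((1 + Complex.I * u : ℂ) ^ 4)⁻¹ = ((2 * Real.pi / 6 * (K * (Y * (Y - 1) * (2 - Y))) : ℝ) : ℂ) := by
    simp_rw [mul_assoc]
    rw [integral_const_mul, chi_int Y hY]
    push_cast; ring
  rw [h2] at h1
  have h3 := (Complex.continuous_re.tendsto _).comp h1
  have h4 := h3.const_mul (6 / (2 * Real.pi))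
  have hpi := Real.pi_pos
  rw [Complex.ofReal_re, show 6 / (2 * Real.pi) * (2 * Real.pi / 6 * (K * (Y * (Y - 1) * (2 - Y)))) = (K * (Y * (Y - 1) * (2 - Y))) by field_simp] at h4
  refine h4.congr' ?_
  filter_upwards [self_mem_nhdsWithin] with r hr
  simp only [Function.comp]
  rw [E_rep2 hU hchar r hr, Complex.ofReal_re]
  field_simp

end

noncomputable def phi (x : ℝ) : ℝ := max x 0 - 1 + Real.exp (-max x 0)

noncomputable def mw (a : ℝ) : ℝ := if a ≤ 1 then a - a ^ 2 / 2 else 1 / 2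

lemma mw_meas : Measurable mw :=
  Measurable.ite measurableSet_Iic (by fun_prop) measurable_const

lemma mw_nonneg (a : ℝ) (ha : 0 < a) : 0 ≤ mw a := by
  unfold mw; split_ifs <;> nlinarith

lemma split_int (g g1 g2 : ℝ → ℝ) (h1 : IntegrableOn g1 (Ioc 0 1)) (h2 : IntegrableOn g2 (Ioi 1))
    (e1 : ∀ x ∈ Ioc (0:ℝ) 1, g x = g1 x) (e2 : ∀ x ∈ Ioi (1:ℝ), g x = g2 x) :
    IntegrableOn g (Ioi 0) ∧ ∫ x in Ioi (0:ℝ), g x = (∫ x in Ioc (0:ℝ) 1, g1 x) + ∫ x in Ioi (1:ℝ), g2 x := by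
  have i1 : IntegrableOn g (Ioc 0 1) := h1.congr_fun (fun x hx => (e1 x hx).symm) measurableSet_Ioc
  have i2 : IntegrableOn g (Ioi 1) := h2.congr_fun (fun x hx => (e2 x hx).symm) measurableSet_Ioi
  rw [← Ioc_union_Ioi_eq_Ioi (zero_le_one (α := ℝ))]
  refine ⟨i1.union i2, ?_⟩
  rw [setIntegral_union (by rw [Set.disjoint_left]; intro x hx hx'; exact absurd hx.2 (not_le.2 hx')) measurableSet_Ioi i1 i2,
    setIntegral_congr_fun measurableSet_Ioc e1, setIntegral_congr_fun measurableSet_Ioi e2]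

lemma phi_rep (x : ℝ) : ∫ a in Ioi (0:ℝ), mw a * (a ^ 3)⁻¹ * fm 3 (a * x) = phi x := by
  rcases le_or_gt x 0 with hx | hx
  · rw [phi, max_eq_right hx]
    have : ∀ a ∈ Ioi (0:ℝ), mw a * (a ^ 3)⁻¹ * fm 3 (a * x) = 0 := by
      intro a ha
      rw [fm, max_eq_right (mul_nonpos_of_nonneg_of_nonpos (le_of_lt ha) hx)]; simp
    rw [setIntegral_congr_fun measurableSet_Ioi this]; simp
  · rw [phi, max_eq_left hx.le]
    have e : ∀ a : ℝ, 0 < a → mw a * (a ^ 3)⁻¹ * fm 3 (a * x) = mw a * (x ^ 3 * Real.exp (-x * a)) := by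
      intro a ha
      rw [fm, max_eq_left (by positivity), mul_pow]
      field_simp
    have h := (split_int (fun a => mw a * (a ^ 3)⁻¹ * fm 3 (a * x)) (fun a => (a - a ^ 2 / 2) * (x ^ 3 * Real.exp (-x * a)))
      (fun a => x ^ 3 / 2 * Real.exp (-x * a)) (Continuous.integrableOn_Ioc (by fun_prop))
      ((integrableOn_exp_mul_Ioi (by linarith) 1).const_mul _) (fun a ha => by
        rw [e a ha.1, mw, if_pos ha.2]) (fun a ha => by
        have ha' : 1 < a := ha
        rw [e a (by linarith), mw, if_neg (not_le.2 ha')]; ring)).2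
    rw [h, integral_const_mul, integral_exp_mul_Ioi (by linarith), ← intervalIntegral.integral_of_le zero_le_one]
    have hd : ∀ a ∈ uIcc (0:ℝ) 1, HasDerivAt (fun a : ℝ => -(Real.exp (-x * a) * ((a - a ^ 2 / 2) * x ^ 2 + (1 - a) * x - 1)))
        ((a - a ^ 2 / 2) * (x ^ 3 * Real.exp (-x * a))) a := by
      intro a _
      have h1 : HasDerivAt (fun a : ℝ => Real.exp (-x * a)) (Real.exp (-x * a) * (-x)) a := by
        simpa using ((hasDerivAt_id a).const_mul (-x)).exp
      have h2 : HasDerivAt (fun a : ℝ => (a - a ^ 2 / 2) * x ^ 2 + (1 - a) * x - 1) ((1 - a) * x ^ 2 + (-1) * x) a := by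
        have p : HasDerivAt (fun a : ℝ => a - a ^ 2 / 2) (1 - a) a := by
          exact ((hasDerivAt_id' a).sub ((hasDerivAt_pow 2 a).div_const 2)).congr_deriv (by norm_num)
        have q : HasDerivAt (fun a : ℝ => 1 - a) (-1) a := by
          simpa using (hasDerivAt_id a).const_sub 1
        exact ((p.mul_const _).add (q.mul_const _)).sub_const 1
      exact (h1.mul h2).neg.congr_deriv (by ring)
    rw [intervalIntegral.integral_eq_sub_of_hasDerivAt hd (Continuous.intervalIntegrable (by fun_prop) _ _)]
    simp
    field_simp
    ring

lemma mw_int (Y : ℝ) (hY : Y ∈ Set.Ioo (1:ℝ) 2) :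
    IntegrableOn (fun a : ℝ => mw a * a ^ (Y - 3)) (Ioi 0) ∧
    ∫ a in Ioi (0:ℝ), mw a * a ^ (Y - 3) = (Y * (Y - 1) * (2 - Y))⁻¹ := by
  obtain ⟨h1, h2⟩ := hY
  have i1 : IntervalIntegrable (fun a : ℝ => a ^ (Y - 2)) volume 0 1 := intervalIntegral.intervalIntegrable_rpow' (by linarith)
  have i2 : IntervalIntegrable (fun a : ℝ => a ^ (Y - 1) / 2) volume 0 1 := (intervalIntegral.intervalIntegrable_rpow' (by linarith)).div_const 2
  have h := split_int (fun a => mw a * a ^ (Y - 3)) (fun a => a ^ (Y - 2) - a ^ (Y - 1) / 2)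
      (fun a => 1 / 2 * a ^ (Y - 3)) ((intervalIntegrable_iff_integrableOn_Ioc_of_le zero_le_one).1 (i1.sub i2))
      ((integrableOn_Ioi_rpow_of_lt (by linarith) one_pos).const_mul _) (fun a ha => by
        have ha0 := ha.1
        rw [mw, if_pos ha.2, show Y - 2 = (Y - 3) + 1 by ring, show Y - 1 = (Y - 3) + 2 by ring,
          Real.rpow_add ha0, Real.rpow_add ha0, Real.rpow_one, Real.rpow_two]; ring) (fun a ha => by
        have ha' : 1 < a := ha
        rw [mw, if_neg (not_le.2 ha')])
  refine ⟨h.1, ?_⟩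
  rw [h.2, ← intervalIntegral.integral_of_le zero_le_one, intervalIntegral.integral_sub i1 i2, intervalIntegral.integral_div,
    integral_rpow (Or.inl (by linarith)), integral_rpow (Or.inl (by linarith)), integral_const_mul, integral_Ioi_rpow_of_lt (by linarith) one_pos]
  have a1 : Y ≠ 0 := by linarith
  have a2 : Y - 1 ≠ 0 := by linarith
  have a3 : 2 - Y ≠ 0 := by linarith
  have a4 : Y - 2 + 1 ≠ 0 := by intro h; apply a2; linarith
  have a5 : Y - 1 + 1 ≠ 0 := by intro h; apply a1; linarith
  have a6 : Y - 3 + 1 ≠ 0 := by intro h; apply a3; linarith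
  rw [Real.zero_rpow a4, Real.zero_rpow a5]
  simp only [Real.one_rpow]
  rw [show Y - 2 + 1 = Y - 1 by ring, show Y - 1 + 1 = Y by ring, show Y - 3 + 1 = - (2 - Y) by ring]
  field_simp
  ring

section
variable {Ω : Type} [MeasurableSpace Ω] {P : Measure Ω} [IsProbabilityMeasure P]
  {Y K : ℝ} {U : Ω → ℝ}

lemma inner_eq (r a : ℝ) (hr : 0 < r) (ha : 0 < a) :
    ∫ ω, mw a * (a ^ 3)⁻¹ * fm 3 (a * (r * U ω)) ∂P =
      r ^ Y * (mw a * a ^ (Y - 3) * ((a * r) ^ (-Y) * ∫ ω, fm 3 ((a * r) * U ω) ∂P)) := by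
  rw [integral_const_mul, Real.rpow_neg (by positivity), Real.mul_rpow ha.le hr.le, Real.rpow_sub ha]
  simp_rw [mul_assoc a r]
  have : (a : ℝ) ^ (3:ℝ) = a ^ 3 := by norm_num
  rw [this]
  have h1 : 0 < r ^ Y := by positivity
  have h2 : 0 < a ^ Y := by positivity
  field_simp

lemma phi_prod (hY : Y ∈ Set.Ioo (1:ℝ) 2) (hU : Measurable U)
    (hchar : ∀ u : ℝ, ∫ ω, Complex.exp (Complex.I * u * (U ω)) ∂P = Complex.exp (K * chi Y u)) (r : ℝ) (hr : 0 < r) :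
    Integrable (fun z : Ω × ℝ => mw z.2 * (z.2 ^ 3)⁻¹ * fm 3 (z.2 * (r * U z.1))) (P.prod (volume.restrict (Ioi 0))) := by
  obtain ⟨D, hD⟩ := Q_bound hY hU hchar
  have hm : Measurable (fun z : Ω × ℝ => mw z.2 * (z.2 ^ 3)⁻¹ * fm 3 (z.2 * (r * U z.1))) := by
    have := mw_meas
    have := (fm_cont 3).measurable
    fun_prop
  rw [integrable_prod_iff' hm.aestronglyMeasurable]
  constructor
  · refine ae_of_all _ fun a => ?_
    refine Integrable.const_mul (f := fun ω => fm 3 (a * (r * U ω))) ?_ (mw a * (a ^ 3)⁻¹)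
    refine Integrable.of_bound (C := 6) (Measurable.aestronglyMeasurable ?_) (ae_of_all _ fun ω => fm_bdd _)
    have := (fm_cont 3).measurable
    fun_prop
  · refine (((mw_int Y hY).1.const_mul (r ^ Y * D))).mono' ?_ ?_
    · exact (hm.norm.stronglyMeasurable.integral_prod_left' (μ := P)).aestronglyMeasurable
    · filter_upwards [ae_restrict_mem measurableSet_Ioi] with a ha
      have ha' : 0 < a := ha
      have h1 : ∀ ω, ‖mw a * (a ^ 3)⁻¹ * fm 3 (a * (r * U ω))‖ = mw a * (a ^ 3)⁻¹ * fm 3 (a * (r * U ω)) := by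
        intro ω
        refine Real.norm_of_nonneg ?_
        have := mw_nonneg a ha'
        have := fm_nonneg 3 (a * (r * U ω))
        positivity
      simp_rw [h1]
      have h0 : 0 ≤ ∫ ω, mw a * (a ^ 3)⁻¹ * fm 3 (a * (r * U ω)) ∂P := integral_nonneg fun ω => by
        have := mw_nonneg a ha'
        have := fm_nonneg 3 (a * (r * U ω))
        simp only [Pi.zero_apply]
        positivity
      rw [Real.norm_of_nonneg h0, inner_eq (Y := Y) r a hr ha', mul_assoc (r ^ Y) D]
      refine mul_le_mul_of_nonneg_left ?_ (Real.rpow_nonneg hr.le Y)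
      rw [mul_comm D]
      refine mul_le_mul_of_nonneg_left (hD _ (by positivity)) ?_
      have := mw_nonneg a ha'
      positivity

lemma phi_integrable (hY : Y ∈ Set.Ioo (1:ℝ) 2) (hU : Measurable U)
    (hchar : ∀ u : ℝ, ∫ ω, Complex.exp (Complex.I * u * (U ω)) ∂P = Complex.exp (K * chi Y u)) (r : ℝ) (hr : 0 < r) :
    Integrable (fun ω => phi (r * U ω)) P := by
  have := (phi_prod hY hU hchar r hr).integral_prod_left
  simpa only [phi_rep] using this

lemma Phi_eq (hY : Y ∈ Set.Ioo (1:ℝ) 2) (hU : Measurable U)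
    (hchar : ∀ u : ℝ, ∫ ω, Complex.exp (Complex.I * u * (U ω)) ∂P = Complex.exp (K * chi Y u)) (r : ℝ) (hr : 0 < r) :
    r ^ (-Y) * ∫ ω, phi (r * U ω) ∂P = ∫ a in Ioi (0:ℝ), mw a * a ^ (Y - 3) * ((a * r) ^ (-Y) * ∫ ω, fm 3 ((a * r) * U ω) ∂P) := by
  have h := integral_integral_swap (f := fun (ω : Ω) (a : ℝ) => mw a * (a ^ 3)⁻¹ * fm 3 (a * (r * U ω))) (phi_prod hY hU hchar r hr)
  simp only [phi_rep] at h
  rw [h, setIntegral_congr_fun measurableSet_Ioi (fun a ha => inner_eq (Y := Y) r a hr ha), integral_const_mul, ← mul_assoc, rpow_neg_mul Y r hr, one_mul]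

lemma Phi_bound (hY : Y ∈ Set.Ioo (1:ℝ) 2) (hU : Measurable U)
    (hchar : ∀ u : ℝ, ∫ ω, Complex.exp (Complex.I * u * (U ω)) ∂P = Complex.exp (K * chi Y u)) :
    ∃ D : ℝ, 0 < D ∧ ∀ r : ℝ, 0 < r → ∫ ω, phi (r * U ω) ∂P ≤ D * r ^ Y := by
  obtain ⟨D, hD⟩ := Q_bound hY hU hchar
  refine ⟨max 1 (∫ a in Ioi (0:ℝ), mw a * a ^ (Y - 3) * D), lt_of_lt_of_le one_pos (le_max_left _ _), fun r hr => ?_⟩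
  have h := Phi_eq hY hU hchar r hr
  have h2 : ∫ a in Ioi (0:ℝ), mw a * a ^ (Y - 3) * ((a * r) ^ (-Y) * ∫ ω, fm 3 ((a * r) * U ω) ∂P) ≤ ∫ a in Ioi (0:ℝ), mw a * a ^ (Y - 3) * D := by
    refine integral_mono_of_nonneg ?_ ((mw_int Y hY).1.mul_const D) ?_
    · filter_upwards [ae_restrict_mem measurableSet_Ioi] with a ha
      have ha' : 0 < a := ha
      have := mw_nonneg a ha'
      have : 0 ≤ ∫ ω, fm 3 ((a * r) * U ω) ∂P := integral_nonneg fun ω => fm_nonneg _ _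
      simp only [Pi.zero_apply]
      positivity
    · filter_upwards [ae_restrict_mem measurableSet_Ioi] with a ha
      have ha' : 0 < a := ha
      have := mw_nonneg a ha'
      exact mul_le_mul_of_nonneg_left (hD _ (by positivity)) (by positivity)
  rw [← h] at h2
  have hp : 0 < r ^ Y := by positivity
  have h3 := h2.trans (le_max_right 1 _)
  calc _ = (r ^ (-Y) * r ^ Y) * ∫ ω, phi (r * U ω) ∂P := by rw [rpow_neg_mul Y r hr, one_mul]
    _ = (r ^ (-Y) * ∫ ω, phi (r * U ω) ∂P) * r ^ Y := by ring
    _ ≤ _ := by gcongr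

lemma Phi_lim (hY : Y ∈ Set.Ioo (1:ℝ) 2) (hU : Measurable U)
    (hchar : ∀ u : ℝ, ∫ ω, Complex.exp (Complex.I * u * (U ω)) ∂P = Complex.exp (K * chi Y u)) :
    Tendsto (fun r : ℝ => r ^ (-Y) * ∫ ω, phi (r * U ω) ∂P) (𝓝[>] 0) (𝓝 K) := by
  obtain ⟨D, hD⟩ := Q_bound hY hU hchar
  have h1 : Tendsto (fun r : ℝ => ∫ a in Ioi (0:ℝ), mw a * a ^ (Y - 3) * ((a * r) ^ (-Y) * ∫ ω, fm 3 ((a * r) * U ω) ∂P))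
      (𝓝[>] 0) (𝓝 (∫ a in Ioi (0:ℝ), mw a * a ^ (Y - 3) * (K * (Y * (Y - 1) * (2 - Y))))) := by
    refine tendsto_integral_filter_of_dominated_convergence (fun a => mw a * a ^ (Y - 3) * D) ?_ ?_ ((mw_int Y hY).1.mul_const D) ?_
    · refine Eventually.of_forall fun r => ?_
      have := mw_meas
      have := (fm_cont 3).measurable
      have hm : Measurable (fun z : Ω × ℝ => fm 3 ((z.2 * r) * U z.1)) := by fun_prop
      have h2 : Measurable (fun a : ℝ => ∫ ω, fm 3 ((a * r) * U ω) ∂P) := (hm.stronglyMeasurable.integral_prod_left' (μ := P)).measurable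
      refine Measurable.aestronglyMeasurable ?_
      fun_prop
    · filter_upwards [self_mem_nhdsWithin] with r hr
      have hr' : 0 < r := hr
      filter_upwards [ae_restrict_mem measurableSet_Ioi] with a ha
      have ha' : 0 < a := ha
      have := mw_nonneg a ha'
      have : 0 ≤ ∫ ω, fm 3 ((a * r) * U ω) ∂P := integral_nonneg fun ω => fm_nonneg _ _
      rw [Real.norm_of_nonneg (by positivity)]
      exact mul_le_mul_of_nonneg_left (hD _ (by positivity)) (by positivity)
    · filter_upwards [ae_restrict_mem measurableSet_Ioi] with a ha
      have ha' : 0 < a := ha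
      refine Tendsto.const_mul _ ?_
      refine (Q_lim hY hU hchar).comp ?_
      rw [tendsto_nhdsWithin_iff]
      constructor
      · have : ContinuousAt (fun r : ℝ => a * r) 0 := by fun_prop
        have := this.tendsto.mono_left (nhdsWithin_le_nhds (s := Ioi 0))
        simpa using this
      · filter_upwards [self_mem_nhdsWithin] with r hr
        exact mul_pos ha' hr
  rw [integral_mul_const, (mw_int Y hY).2] at h1
  have a1 : Y ≠ 0 := by linarith [hY.1]
  have a2 : Y - 1 ≠ 0 := by linarith [hY.1]
  have a3 : 2 - Y ≠ 0 := by linarith [hY.2]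
  rw [show (Y * (Y - 1) * (2 - Y))⁻¹ * (K * (Y * (Y - 1) * (2 - Y))) = K by field_simp] at h1
  refine h1.congr' ?_
  filter_upwards [self_mem_nhdsWithin] with r hr
  exact (Phi_eq hY hU hchar r hr).symm

end

lemma phi_cont : Continuous phi := by unfold phi; fun_prop

lemma phi_nonneg (x : ℝ) : 0 ≤ phi x := by
  unfold phi; linarith [Real.add_one_le_exp (-max x 0)]

lemma phi_nonpos {x : ℝ} (hx : x ≤ 0) : phi x = 0 := by
  rw [phi, max_eq_right hx]; simp

lemma phi_pos {x : ℝ} (hx : 0 < x) : 0 < phi x := by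
  rw [phi, max_eq_left hx.le]; linarith [Real.add_one_lt_exp (x := -x) (by linarith)]

lemma phi_aux {a b : ℝ} (h : a ≤ b) : 0 ≤ phi b - phi a ∧ phi b - phi a ≤ b - a := by
  unfold phi
  have h1 : max a 0 ≤ max b 0 := max_le_max h le_rfl
  have h2 : max b 0 - max a 0 ≤ b - a := by
    rcases le_total a 0 with ha | ha <;> rcases le_total b 0 with hb | hb <;>
      simp only [max_eq_left, max_eq_right, ha, hb] <;> linarith
  have h3 : 0 ≤ max a 0 := le_max_right _ _
  have h4 : Real.exp (-max b 0) = Real.exp (-max a 0) * Real.exp (-(max b 0 - max a 0)) := by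
    rw [← Real.exp_add]; ring_nf
  have h5 := Real.add_one_le_exp (-(max b 0 - max a 0))
  have h6 : Real.exp (-max b 0) ≤ Real.exp (-max a 0) := Real.exp_le_exp.2 (by linarith)
  have h7 : Real.exp (-max a 0) ≤ 1 := Real.exp_le_one_iff.2 (by linarith)
  have h8 := Real.exp_pos (-max a 0)
  constructor
  · have : Real.exp (-max a 0) - Real.exp (-max b 0) ≤ max b 0 - max a 0 := by
      rw [h4]; nlinarith
    linarith
  · linarith

lemma phi_mono : Monotone phi := fun _ _ h => by linarith [(phi_aux h).1]

lemma phi_lip (a b : ℝ) : |phi a - phi b| ≤ |a - b| := by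
  rcases le_total a b with h | h
  · rw [abs_sub_comm, abs_sub_comm a, abs_of_nonneg (phi_aux h).1, abs_of_nonneg (by linarith)]; exact (phi_aux h).2
  · rw [abs_of_nonneg (phi_aux h).1, abs_of_nonneg (by linarith)]; exact (phi_aux h).2

lemma phi_le_sq {x : ℝ} (hx : 0 ≤ x) : phi x ≤ x ^ 2 := by
  rw [phi, max_eq_left hx]
  have h1 := Real.add_one_le_exp x
  have h2 : Real.exp (-x) * Real.exp x = 1 := by rw [← Real.exp_add]; simp
  have h3 := Real.exp_pos (-x)
  have h4 : Real.exp (-x) * (x + 1) ≤ 1 := by nlinarith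
  have h5 : Real.exp (-x) ≤ 1 := Real.exp_le_one_iff.2 (by linarith)
  nlinarith [Real.add_one_le_exp (-x), mul_nonneg hx (sub_nonneg.2 h5)]

lemma phi_ge_sq {x : ℝ} (hx : 0 ≤ x) (hx1 : x ≤ 1) : x ^ 2 / 4 ≤ phi x := by
  rw [phi, max_eq_left hx]
  have h1 := Real.add_one_le_exp (-(x / 2))
  have h2 : Real.exp (-x) = Real.exp (-(x / 2)) ^ 2 := by rw [← Real.exp_nat_mul]; ring_nf
  rw [h2]
  nlinarith

lemma phi_int (a b : ℝ) (h : a ≤ b) :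
    ∫ x in Ioi (0:ℝ), (if a ≤ x ∧ x ≤ b then 1 - Real.exp (-x) else 0) = phi b - phi a := by
  have e : ∀ x ∈ Ioi (0:ℝ), (if a ≤ x ∧ x ≤ b then 1 - Real.exp (-x) else 0) =
      (Icc (max a 0) (max b 0)).indicator (fun x => 1 - Real.exp (-x)) x := by
    intro x hx
    have hx' : 0 < x := hx
    rw [indicator_apply]
    refine if_congr ?_ rfl rfl
    simp only [mem_Icc, max_le_iff, le_max_iff]
    constructor
    · rintro ⟨h1, h2⟩; exact ⟨⟨h1, hx'.le⟩, Or.inl h2⟩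
    · rintro ⟨⟨h1, _⟩, h2 | h2⟩
      · exact ⟨h1, h2⟩
      · linarith
  have h3 : max a 0 ≤ max b 0 := max_le_max h le_rfl
  rw [setIntegral_congr_fun measurableSet_Ioi e]
  rw [setIntegral_eq_integral_of_ae_compl_eq_zero, integral_indicator measurableSet_Icc, integral_Icc_eq_integral_Ioc,
    ← intervalIntegral.integral_of_le h3]
  · rw [intervalIntegral.integral_eq_sub_of_hasDerivAt (f := fun x => x + Real.exp (-x)) _ (Continuous.intervalIntegrable (by fun_prop) _ _)]
    · unfold phi; ring
    · intro x _
      have := (hasDerivAt_id' x).add (hasDerivAt_neg x).exp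
      exact this.congr_deriv (by ring)
  · filter_upwards [compl_mem_ae_iff.2 (measure_singleton (μ := volume) (0:ℝ))] with x hx0 hx
    rw [indicator_of_notMem]
    rintro ⟨h1, _⟩
    have := le_trans (le_max_right a 0) h1
    exact hx (lt_of_le_of_ne this (fun h => hx0 h.symm))

noncomputable def hh (M G s u v : ℝ) : ℝ :=
  if s ≤ u - v then phi (M * u + G * v) - phi ((M - 1) * u + (G + 1) * v) else 0

lemma hh_meas (M G : ℝ) : Measurable (fun z : ℝ × ℝ × ℝ => hh M G z.1 z.2.1 z.2.2) := by
  have := phi_cont.measurable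
  unfold hh
  refine Measurable.ite (measurableSet_le (by fun_prop) (by fun_prop)) (by fun_prop) measurable_const

lemma hh_bounds {M G s : ℝ} (hG : 0 < G) (hs : 0 ≤ s) (u v : ℝ) :
    0 ≤ hh M G s u v ∧ hh M G s u v ≤ phi ((M + G) * u) := by
  unfold hh
  split_ifs with h
  · have h1 := (phi_aux (a := (M - 1) * u + (G + 1) * v) (b := M * u + G * v) (by nlinarith)).1
    refine ⟨h1, ?_⟩
    have h2 : phi (M * u + G * v) ≤ phi ((M + G) * u) := phi_mono (by nlinarith)
    linarith [phi_nonneg ((M - 1) * u + (G + 1) * v)]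
  · exact ⟨le_rfl, phi_nonneg _⟩

lemma kk_bounds {M G : ℝ} (hM : 1 < M) (hG : 0 < G) (u : ℝ) :
    0 ≤ phi (M * u) - phi ((M - 1) * u) ∧ phi (M * u) - phi ((M - 1) * u) ≤ phi ((M + G) * u) := by
  rcases le_total u 0 with h | h
  · rw [phi_nonpos (by nlinarith : M * u ≤ 0), phi_nonpos (by nlinarith : (M - 1) * u ≤ 0)]
    exact ⟨by simp, by simpa using phi_nonneg _⟩
  · have h1 : phi (M * u) ≤ phi ((M + G) * u) := phi_mono (by nlinarith)
    have h2 : phi ((M - 1) * u) ≤ phi (M * u) := phi_mono (by nlinarith)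
    exact ⟨by linarith, by linarith [phi_nonneg ((M - 1) * u)]⟩

lemma hk_diff {M G s δ η : ℝ} (hM : 1 < M) (hG : 0 < G) (hs : 0 ≤ s) (hδ : 0 < δ) (hη : 0 < η) (h : η + s ≤ δ) (u v : ℝ) :
    |hh M G s u v - (phi (M * u) - phi ((M - 1) * u))| ≤
      4 * (M + G) ^ 2 * δ ^ 2 * phi (δ⁻¹ * u) + phi ((M + G) * u) * (if η < |v| then 1 else 0)
        + (2 * G + 1) * η / phi ((M + G) * δ) * phi ((M + G) * u) := by
  have hb := hh_bounds (M := M) hG hs u v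
  have kb := kk_bounds hM hG u
  have hp : 0 < phi ((M + G) * δ) := phi_pos (by positivity)
  have p1 := phi_nonneg (δ⁻¹ * u)
  have p2 := phi_nonneg ((M + G) * u)
  have q1 : 0 ≤ 4 * (M + G) ^ 2 * δ ^ 2 * phi (δ⁻¹ * u) := by positivity
  have q2 : 0 ≤ phi ((M + G) * u) * (if η < |v| then 1 else 0) := by split_ifs <;> simp [p2]
  have q3 : 0 ≤ (2 * G + 1) * η / phi ((M + G) * δ) * phi ((M + G) * u) := by positivity
  have hd : |hh M G s u v - (phi (M * u) - phi ((M - 1) * u))| ≤ phi ((M + G) * u) := by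
    rw [abs_le]; constructor <;> linarith
  rcases le_or_gt u 0 with h1 | h1
  · rw [phi_nonpos (by nlinarith : (M + G) * u ≤ 0)] at hd
    linarith
  rcases le_or_gt u δ with h2 | h2
  · have a1 := phi_le_sq (x := (M + G) * u) (by nlinarith)
    have a2 := phi_ge_sq (x := δ⁻¹ * u) (by positivity) (by rw [inv_mul_le_iff₀ hδ]; linarith)
    have a3 : 4 * (M + G) ^ 2 * δ ^ 2 * ((δ⁻¹ * u) ^ 2 / 4) ≤ 4 * (M + G) ^ 2 * δ ^ 2 * phi (δ⁻¹ * u) := by gcongr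
    have a4 : 4 * (M + G) ^ 2 * δ ^ 2 * ((δ⁻¹ * u) ^ 2 / 4) = ((M + G) * u) ^ 2 := by field_simp
    linarith
  by_cases hv : η < |v|
  · rw [if_pos hv] at q2 ⊢
    linarith
  · have hv' := abs_le.1 (not_lt.1 hv)
    have e1 : hh M G s u v = phi (M * u + G * v) - phi ((M - 1) * u + (G + 1) * v) := by
      rw [hh, if_pos (by linarith)]
    have l1 := phi_lip (M * u + G * v) (M * u)
    have l2 := phi_lip ((M - 1) * u) ((M - 1) * u + (G + 1) * v)
    have l3 : |M * u + G * v - M * u| ≤ G * η := by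
      rw [show M * u + G * v - M * u = G * v by ring, abs_mul, abs_of_pos hG]
      exact mul_le_mul_of_nonneg_left (not_lt.1 hv) hG.le
    have l4 : |(M - 1) * u - ((M - 1) * u + (G + 1) * v)| ≤ (G + 1) * η := by
      rw [show (M - 1) * u - ((M - 1) * u + (G + 1) * v) = -((G + 1) * v) by ring, abs_neg, abs_mul, abs_of_pos (by linarith : 0 < G + 1)]
      exact mul_le_mul_of_nonneg_left (not_lt.1 hv) (by linarith)
    have l5 : |hh M G s u v - (phi (M * u) - phi ((M - 1) * u))| ≤ (2 * G + 1) * η := by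
      rw [e1]
      have := abs_add_le (phi (M * u + G * v) - phi (M * u)) (phi ((M - 1) * u) - phi ((M - 1) * u + (G + 1) * v))
      rw [show phi (M * u + G * v) - phi ((M - 1) * u + (G + 1) * v) - (phi (M * u) - phi ((M - 1) * u)) = phi (M * u + G * v) - phi (M * u) + (phi ((M - 1) * u) - phi ((M - 1) * u + (G + 1) * v)) by ring]
      linarith
    have l6 : (2 * G + 1) * η ≤ (2 * G + 1) * η / phi ((M + G) * δ) * phi ((M + G) * u) := by
      rw [div_mul_eq_mul_div, le_div_iff₀ hp]
      exact mul_le_mul_of_nonneg_left (phi_mono (by nlinarith)) (by positivity)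
    linarith

section
variable {Ω : Type} [MeasurableSpace Ω] {P : Measure Ω} [IsProbabilityMeasure P]
  {Y K : ℝ} {U V : Ω → ℝ}

lemma r_tendsto (hY : Y ∈ Set.Ioo (1:ℝ) 2) : Tendsto (fun t : ℝ => t ^ (1 / Y)) (𝓝[>] 0) (𝓝[>] 0) := by
  have hp : 0 < 1 / Y := by have := hY.1; positivity
  rw [tendsto_nhdsWithin_iff]
  constructor
  · have h := (Real.continuousAt_rpow_const 0 (1 / Y) (Or.inr hp.le)).tendsto
    rw [Real.zero_rpow hp.ne'] at h
    exact h.mono_left nhdsWithin_le_nhds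
  · filter_upwards [self_mem_nhdsWithin] with t ht
    exact Real.rpow_pos_of_pos ht _

lemma r_pow (hY : Y ∈ Set.Ioo (1:ℝ) 2) (t : ℝ) (ht : 0 < t) : (t ^ (1 / Y)) ^ Y = t := by
  have : Y ≠ 0 := by linarith [hY.1]
  rw [← Real.rpow_mul ht.le, one_div_mul_cancel this, Real.rpow_one]

lemma r_pow_neg (hY : Y ∈ Set.Ioo (1:ℝ) 2) (t : ℝ) (ht : 0 < t) : (t ^ (1 / Y)) ^ (-Y) = t⁻¹ := by
  rw [Real.rpow_neg (by positivity), r_pow hY t ht]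

lemma k_lim (hY : Y ∈ Set.Ioo (1:ℝ) 2) (hU : Measurable U)
    (hchar : ∀ u : ℝ, ∫ ω, Complex.exp (Complex.I * u * (U ω)) ∂P = Complex.exp (K * chi Y u)) (l : ℝ) (hl : 0 < l) :
    Tendsto (fun t : ℝ => t⁻¹ * ∫ ω, phi (l * (t ^ (1 / Y) * U ω)) ∂P) (𝓝[>] 0) (𝓝 (K * l ^ Y)) := by
  have h1 : Tendsto (fun t : ℝ => l * t ^ (1 / Y)) (𝓝[>] 0) (𝓝[>] 0) := by
    have h := r_tendsto hY
    rw [tendsto_nhdsWithin_iff] at h ⊢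
    refine ⟨by simpa using h.1.const_mul l, h.2.mono fun t ht => mul_pos hl ht⟩
  have h2 := ((Phi_lim hY hU hchar).comp h1).mul_const (l ^ Y)
  refine h2.congr' ?_
  filter_upwards [self_mem_nhdsWithin] with t ht
  have ht' : 0 < t := ht
  have hr : 0 < t ^ (1 / Y) := Real.rpow_pos_of_pos ht' _
  simp only [Function.comp_apply]
  rw [Real.mul_rpow hl.le hr.le, r_pow_neg hY t ht', show ∀ a b c d : ℝ, a * b * c * d = (a * d) * (b * c) by intros; ring, rpow_neg_mul Y l hl, one_mul]
  simp_rw [mul_assoc]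

lemma phi_scale_bound (hY : Y ∈ Set.Ioo (1:ℝ) 2) {D : ℝ} (hD : ∀ r : ℝ, 0 < r → ∫ ω, phi (r * U ω) ∂P ≤ D * r ^ Y)
    (l : ℝ) (hl : 0 < l) (t : ℝ) (ht : 0 < t) : t⁻¹ * ∫ ω, phi (l * (t ^ (1 / Y) * U ω)) ∂P ≤ D * l ^ Y := by
  have hr : 0 < t ^ (1 / Y) := Real.rpow_pos_of_pos ht _
  have h := hD (l * t ^ (1 / Y)) (by positivity)
  rw [Real.mul_rpow hl.le hr.le, r_pow hY t ht] at h
  simp_rw [mul_assoc] at h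
  rw [inv_mul_le_iff₀ ht]
  linarith

lemma phi_int' (hY : Y ∈ Set.Ioo (1:ℝ) 2) (hU : Measurable U)
    (hchar : ∀ u : ℝ, ∫ ω, Complex.exp (Complex.I * u * (U ω)) ∂P = Complex.exp (K * chi Y u)) (l : ℝ) (hl : 0 < l)
    (t : ℝ) (ht : 0 < t) : Integrable (fun ω => phi (l * (t ^ (1 / Y) * U ω))) P := by
  have hr : 0 < t ^ (1 / Y) := Real.rpow_pos_of_pos ht _
  have := phi_integrable hY hU hchar (l * t ^ (1 / Y)) (by positivity)
  simpa only [mul_assoc] using this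

lemma hh_integrable (hY : Y ∈ Set.Ioo (1:ℝ) 2) (hU : Measurable U) (hV : Measurable V)
    (hchar : ∀ u : ℝ, ∫ ω, Complex.exp (Complex.I * u * (U ω)) ∂P = Complex.exp (K * chi Y u)) {M G s : ℝ}
    (hM : 1 < M) (hG : 0 < G) (hs : 0 ≤ s) (t : ℝ) (ht : 0 < t) :
    Integrable (fun ω => hh M G s (t ^ (1 / Y) * U ω) (t ^ (1 / Y) * V ω)) P := by
  refine (phi_int' hY hU hchar (M + G) (by linarith) t ht).mono' ?_ ?_
  · have := (hh_meas M G).comp (f := fun ω => (s, t ^ (1 / Y) * U ω, t ^ (1 / Y) * V ω)) (by fun_prop)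
    exact this.aestronglyMeasurable
  · refine ae_of_all _ fun ω => ?_
    have := hh_bounds (M := M) hG hs (t ^ (1 / Y) * U ω) (t ^ (1 / Y) * V ω)
    rw [Real.norm_of_nonneg this.1]
    exact this.2

lemma tail_lim (hY : Y ∈ Set.Ioo (1:ℝ) 2) (hV : Measurable V) (η : ℝ) (hη : 0 < η) :
    Tendsto (fun t : ℝ => ∫ ω, (if η < |t ^ (1 / Y) * V ω| then (1:ℝ) else 0) ∂P) (𝓝[>] 0) (𝓝 0) := by
  have h0 : ∫ ω, (0:ℝ) ∂P = 0 := by simp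
  suffices hs : Tendsto (fun t : ℝ => ∫ ω, (if η < |t ^ (1 / Y) * V ω| then (1:ℝ) else 0) ∂P) (𝓝[>] 0) (𝓝 (∫ ω, (0:ℝ) ∂P)) by
    rwa [h0] at hs
  refine tendsto_integral_filter_of_dominated_convergence (fun _ => 1) ?_ ?_ (integrable_const _) ?_
  · refine Eventually.of_forall fun t => Measurable.aestronglyMeasurable ?_
    exact Measurable.ite (measurableSet_lt (by fun_prop) (by fun_prop)) measurable_const measurable_const
  · refine Eventually.of_forall fun t => ae_of_all _ fun ω => ?_
    split_ifs <;> simp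
  · refine ae_of_all _ fun ω => ?_
    have h := (tendsto_nhdsWithin_iff.1 (r_tendsto hY)).1.mul_const (V ω)
    have h2 := h.abs
    simp only [zero_mul, abs_zero] at h2
    refine tendsto_const_nhds.congr' ?_
    filter_upwards [h2.eventually_lt_const hη] with t ht
    rw [if_neg (not_lt.2 ht.le)]

lemma diff_bound (hY : Y ∈ Set.Ioo (1:ℝ) 2) (hU : Measurable U) (hV : Measurable V) (hI : IndepFun U V P)
    (hchar : ∀ u : ℝ, ∫ ω, Complex.exp (Complex.I * u * (U ω)) ∂P = Complex.exp (K * chi Y u)) {M G s δ η D t : ℝ}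
    (hM : 1 < M) (hG : 0 < G) (hs : 0 ≤ s) (ht : 0 < t) (hδ : 0 < δ) (hη : 0 < η) (h : η + s ≤ δ)
    (hD : ∀ r : ℝ, 0 < r → ∫ ω, phi (r * U ω) ∂P ≤ D * r ^ Y) :
    |t⁻¹ * ∫ ω, hh M G s (t ^ (1 / Y) * U ω) (t ^ (1 / Y) * V ω) ∂P -
      (t⁻¹ * ∫ ω, phi (M * (t ^ (1 / Y) * U ω)) ∂P - t⁻¹ * ∫ ω, phi ((M - 1) * (t ^ (1 / Y) * U ω)) ∂P)| ≤
    4 * (M + G) ^ 2 * D * δ ^ (2 - Y) + D * (M + G) ^ Y * (∫ ω, (if η < |t ^ (1 / Y) * V ω| then (1:ℝ) else 0) ∂P) +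
      (2 * G + 1) * η / phi ((M + G) * δ) * (D * (M + G) ^ Y) := by
  have i1 := hh_integrable hY hU hV hchar hM hG hs t ht
  have i2 := phi_int' hY hU hchar M (by linarith) t ht
  have i3 := phi_int' hY hU hchar (M - 1) (by linarith) t ht
  have i4 := phi_int' hY hU hchar (M + G) (by linarith) t ht
  have i5 := phi_int' hY hU hchar δ⁻¹ (by positivity) t ht
  have mi : Measurable (fun v : ℝ => if η < |t ^ (1 / Y) * v| then (1:ℝ) else 0) :=
    Measurable.ite (measurableSet_lt (by fun_prop) (by fun_prop)) measurable_const measurable_const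
  have mp : Measurable (fun u : ℝ => phi ((M + G) * (t ^ (1 / Y) * u))) := by
    have := phi_cont.measurable
    fun_prop
  have i6 : Integrable (fun ω => phi ((M + G) * (t ^ (1 / Y) * U ω)) * (if η < |t ^ (1 / Y) * V ω| then (1:ℝ) else 0)) P := by
    refine i4.mono' ((mp.comp hU).mul (mi.comp hV)).aestronglyMeasurable (ae_of_all _ fun ω => ?_)
    have := phi_nonneg ((M + G) * (t ^ (1 / Y) * U ω))
    rw [norm_mul, Real.norm_of_nonneg this]
    refine mul_le_of_le_one_right this ?_
    split_ifs <;> simp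
  have e6 : ∫ ω, phi ((M + G) * (t ^ (1 / Y) * U ω)) * (if η < |t ^ (1 / Y) * V ω| then (1:ℝ) else 0) ∂P =
      (∫ ω, phi ((M + G) * (t ^ (1 / Y) * U ω)) ∂P) * ∫ ω, (if η < |t ^ (1 / Y) * V ω| then (1:ℝ) else 0) ∂P :=
    (hI.comp mp mi).integral_fun_mul_eq_mul_integral (mp.comp hU).aestronglyMeasurable (mi.comp hV).aestronglyMeasurable
  have hn : 0 ≤ ∫ ω, (if η < |t ^ (1 / Y) * V ω| then (1:ℝ) else 0) ∂P :=
    integral_nonneg fun ω => by simp only [Pi.zero_apply]; split_ifs <;> simp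
  have hp : 0 < phi ((M + G) * δ) := phi_pos (by positivity)
  have key : |∫ ω, (hh M G s (t ^ (1 / Y) * U ω) (t ^ (1 / Y) * V ω) - (phi (M * (t ^ (1 / Y) * U ω)) - phi ((M - 1) * (t ^ (1 / Y) * U ω)))) ∂P| ≤
      ∫ ω, (4 * (M + G) ^ 2 * δ ^ 2 * phi (δ⁻¹ * (t ^ (1 / Y) * U ω)) + phi ((M + G) * (t ^ (1 / Y) * U ω)) * (if η < |t ^ (1 / Y) * V ω| then (1:ℝ) else 0)
        + (2 * G + 1) * η / phi ((M + G) * δ) * phi ((M + G) * (t ^ (1 / Y) * U ω))) ∂P := by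
    refine (abs_integral_le_integral_abs).trans (integral_mono (i1.sub (i2.sub i3)).abs (((i5.const_mul _).add i6).add (i4.const_mul _)) fun ω => ?_)
    exact hk_diff hM hG hs hδ hη h _ _
  have i8 : Integrable (fun ω => phi (M * (t ^ (1 / Y) * U ω)) - phi ((M - 1) * (t ^ (1 / Y) * U ω))) P := i2.sub i3
  have i7 : Integrable (fun ω => 4 * (M + G) ^ 2 * δ ^ 2 * phi (δ⁻¹ * (t ^ (1 / Y) * U ω)) + phi ((M + G) * (t ^ (1 / Y) * U ω)) * (if η < |t ^ (1 / Y) * V ω| then (1:ℝ) else 0)) P :=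
    (i5.const_mul _).add i6
  rw [integral_add i7 (i4.const_mul _), integral_add (i5.const_mul _) i6, integral_const_mul, integral_const_mul, e6,
    integral_sub i1 i8, integral_sub i2 i3] at key
  have b5 := phi_scale_bound hY hD δ⁻¹ (by positivity) t ht
  have b4 := phi_scale_bound hY hD (M + G) (by linarith) t ht
  have ed : δ ^ 2 * (δ⁻¹) ^ Y = δ ^ (2 - Y) := by
    rw [Real.inv_rpow hδ.le, Real.rpow_sub hδ, Real.rpow_two]; rfl
  rw [← mul_sub, ← mul_sub, abs_mul, abs_of_pos (inv_pos.2 ht)]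
  refine (mul_le_mul_of_nonneg_left key (inv_pos.2 ht).le).trans ?_
  have c1 : 4 * (M + G) ^ 2 * δ ^ 2 * (t⁻¹ * ∫ ω, phi (δ⁻¹ * (t ^ (1 / Y) * U ω)) ∂P) ≤ 4 * (M + G) ^ 2 * δ ^ 2 * (D * δ⁻¹ ^ Y) := by gcongr
  have c2 := mul_le_mul_of_nonneg_right b4 hn
  have c3 : (2 * G + 1) * η / phi ((M + G) * δ) * (t⁻¹ * ∫ ω, phi ((M + G) * (t ^ (1 / Y) * U ω)) ∂P) ≤ (2 * G + 1) * η / phi ((M + G) * δ) * (D * (M + G) ^ Y) := by gcongr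
  rw [← ed]
  linarith

lemma h_lim (hY : Y ∈ Set.Ioo (1:ℝ) 2) (hU : Measurable U) (hV : Measurable V) (hI : IndepFun U V P)
    (hchar : ∀ u : ℝ, ∫ ω, Complex.exp (Complex.I * u * (U ω)) ∂P = Complex.exp (K * chi Y u)) {M G w : ℝ}
    (hM : 1 < M) (hG : 0 < G) (hw : 0 ≤ w) :
    Tendsto (fun t : ℝ => t⁻¹ * ∫ ω, hh M G (Real.sqrt t * w) (t ^ (1 / Y) * U ω) (t ^ (1 / Y) * V ω) ∂P) (𝓝[>] 0)
      (𝓝 (K * (M ^ Y - (M - 1) ^ Y))) := by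
  obtain ⟨D, hD0, hD⟩ := Phi_bound hY hU hchar
  have hk := (k_lim hY hU hchar M (by linarith)).sub (k_lim hY hU hchar (M - 1) (by linarith))
  rw [← mul_sub] at hk
  refine (tendsto_iff_of_dist ?_).2 hk
  rw [Metric.tendsto_nhds]
  intro ε hε
  -- choose the level delta
  have h2 : Tendsto (fun δ : ℝ => 4 * (M + G) ^ 2 * D * δ ^ (2 - Y)) (𝓝[>] 0) (𝓝 0) := by
    have hp : 0 < 2 - Y := by linarith [hY.2]
    have h := (Real.continuousAt_rpow_const 0 (2 - Y) (Or.inr hp.le)).tendsto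
    rw [Real.zero_rpow hp.ne'] at h
    simpa using (h.mono_left nhdsWithin_le_nhds).const_mul (4 * (M + G) ^ 2 * D)
  obtain ⟨δ, hδ1, hδ⟩ := ((h2.eventually_lt_const (by positivity : (0:ℝ) < ε / 3)).and self_mem_nhdsWithin).exists
  have hδ' : 0 < δ := hδ
  have h3 : Tendsto (fun η : ℝ => (2 * G + 1) * η / phi ((M + G) * δ) * (D * (M + G) ^ Y)) (𝓝[>] 0) (𝓝 0) := by
    have : Continuous (fun η : ℝ => (2 * G + 1) * η / phi ((M + G) * δ) * (D * (M + G) ^ Y)) := by fun_prop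
    have h := (this.tendsto 0).mono_left (nhdsWithin_le_nhds (s := Ioi 0))
    simpa using h
  have h3' : ∀ᶠ η : ℝ in 𝓝[>] 0, η < δ / 2 :=
    (tendsto_id.mono_left nhdsWithin_le_nhds : Tendsto (fun η : ℝ => η) (𝓝[>] 0) (𝓝 0)).eventually_lt_const (by positivity)
  obtain ⟨η, ⟨hη1, hη2⟩, hη⟩ := (((h3.eventually_lt_const (by positivity : (0:ℝ) < ε / 3)).and h3').and self_mem_nhdsWithin).exists
  have hη' : 0 < η := hη
  have h4 := (tail_lim (P := P) hY hV η hη').const_mul (D * (M + G) ^ Y)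
  rw [mul_zero] at h4
  have h5 : Tendsto (fun t : ℝ => Real.sqrt t * w) (𝓝[>] 0) (𝓝 0) := by
    have : Continuous (fun t : ℝ => Real.sqrt t * w) := by fun_prop
    simpa using (this.tendsto 0).mono_left (nhdsWithin_le_nhds (s := Ioi 0))
  filter_upwards [self_mem_nhdsWithin, h4.eventually_lt_const (by positivity : (0:ℝ) < ε / 3), h5.eventually_lt_const (by positivity : (0:ℝ) < δ / 2)] with t ht b1 b2
  have := diff_bound hY hU hV hI hchar hM hG (s := Real.sqrt t * w) (by positivity) ht hδ' hη' (by linarith) hD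
  rw [Real.dist_eq, sub_zero, abs_of_nonneg dist_nonneg, Real.dist_eq]
  linarith

end

section
variable {Ω : Type} [MeasurableSpace Ω] {P : Measure Ω} [IsProbabilityMeasure P]
  {Y K : ℝ} {U V : Ω → ℝ}

lemma inner_fub (hY : Y ∈ Set.Ioo (1:ℝ) 2) (hU : Measurable U) (hV : Measurable V)
    (hchar : ∀ u : ℝ, ∫ ω, Complex.exp (Complex.I * u * (U ω)) ∂P = Complex.exp (K * chi Y u)) {M G t w : ℝ}
    (hM : 1 < M) (hG : 0 < G) (ht : 0 < t) (hw : 0 ≤ w) :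
    (∫ x in Set.Ioi (0:ℝ), (Real.exp (-x) - 1) *
          (P {ω | t ^ ((1:ℝ)/2 - 1/Y) * w ≤ U ω - V ω ∧
              (M - 1) * U ω + (G + 1) * V ω ≤ t ^ (-(1/Y)) * x ∧
              t ^ (-(1/Y)) * x ≤ M * U ω + G * V ω}).toReal) =
      -∫ ω, hh M G (Real.sqrt t * w) (t ^ (1 / Y) * U ω) (t ^ (1 / Y) * V ω) ∂P := by
  have hr : 0 < t ^ (1 / Y) := Real.rpow_pos_of_pos ht _
  have hh_int := hh_integrable hY hU hV hchar hM hG (s := Real.sqrt t * w) (by positivity) t ht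
  set r := t ^ (1 / Y) with hr_def
  have e1 : t ^ ((1:ℝ)/2 - 1/Y) = Real.sqrt t * r⁻¹ := by
    rw [Real.rpow_sub ht, Real.sqrt_eq_rpow]; rfl
  have e2 : t ^ (-(1/Y)) = r⁻¹ := Real.rpow_neg ht.le _
  let S : ℝ → Set Ω := fun x => {ω | Real.sqrt t * w ≤ r * U ω - r * V ω ∧
    ((M - 1) * (r * U ω) + (G + 1) * (r * V ω) ≤ x ∧ x ≤ M * (r * U ω) + G * (r * V ω))}
  have hS : ∀ x, {ω | t ^ ((1:ℝ)/2 - 1/Y) * w ≤ U ω - V ω ∧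
              (M - 1) * U ω + (G + 1) * V ω ≤ t ^ (-(1/Y)) * x ∧
              t ^ (-(1/Y)) * x ≤ M * U ω + G * V ω} = S x := by
    intro x
    ext ω
    simp only [S, mem_ofPred_eq]
    rw [e1, e2]
    refine and_congr ?_ (and_congr ?_ ?_)
    · rw [show Real.sqrt t * r⁻¹ * w = r⁻¹ * (Real.sqrt t * w) by ring, inv_mul_le_iff₀ hr, mul_sub]
    · rw [le_inv_mul_iff₀ hr]
      rw [show r * ((M - 1) * U ω + (G + 1) * V ω) = (M - 1) * (r * U ω) + (G + 1) * (r * V ω) by ring]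
    · rw [inv_mul_le_iff₀ hr]
      rw [show r * (M * U ω + G * V ω) = M * (r * U ω) + G * (r * V ω) by ring]
  simp_rw [hS]
  have mS2 : MeasurableSet {z : Ω × ℝ | Real.sqrt t * w ≤ r * U z.1 - r * V z.1 ∧
    ((M - 1) * (r * U z.1) + (G + 1) * (r * V z.1) ≤ z.2 ∧ z.2 ≤ M * (r * U z.1) + G * (r * V z.1))} := by
    have m1 : MeasurableSet {z : Ω × ℝ | Real.sqrt t * w ≤ r * U z.1 - r * V z.1} := measurableSet_le (by fun_prop) (by fun_prop)
    have m2 : MeasurableSet {z : Ω × ℝ | (M - 1) * (r * U z.1) + (G + 1) * (r * V z.1) ≤ z.2} := measurableSet_le (by fun_prop) (by fun_prop)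
    have m3 : MeasurableSet {z : Ω × ℝ | z.2 ≤ M * (r * U z.1) + G * (r * V z.1)} := measurableSet_le (by fun_prop) (by fun_prop)
    exact m1.inter (m2.inter m3)
  have mS : ∀ x, MeasurableSet (S x) := fun x => measurable_prodMk_right (y := x) mS2
  classical
  let F : Ω → ℝ → ℝ := fun ω x => if Real.sqrt t * w ≤ r * U ω - r * V ω ∧
    ((M - 1) * (r * U ω) + (G + 1) * (r * V ω) ≤ x ∧ x ≤ M * (r * U ω) + G * (r * V ω)) then 1 - Real.exp (-x) else 0
  have mF : Measurable (Function.uncurry F) := by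
    refine Measurable.ite mS2 (by fun_prop) measurable_const
  have hF1 : ∀ x, ∫ ω, F ω x ∂P = (1 - Real.exp (-x)) * (P (S x)).toReal := by
    intro x
    have : (fun ω => F ω x) = (S x).indicator (fun _ => 1 - Real.exp (-x)) := by
      ext ω; rw [indicator_apply]; rfl
    rw [this, integral_indicator_const _ (mS x), smul_eq_mul, mul_comm]; rfl
  have hF2 : ∀ ω, ∫ x in Ioi (0:ℝ), F ω x = hh M G (Real.sqrt t * w) (r * U ω) (r * V ω) := by
    intro ω
    unfold hh
    split_ifs with h
    · rw [← phi_int _ _ (by nlinarith [mul_nonneg (Real.sqrt_nonneg t) hw])]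
      refine integral_congr_ae (ae_of_all _ fun x => ?_)
      simp only [F, h, true_and]
    · simp only [F, h, false_and, if_false, integral_zero]
  have hF0 : ∀ ω, ∀ x ∈ Ioi (0:ℝ), ‖F ω x‖ = F ω x := by
    intro ω x hx
    refine Real.norm_of_nonneg ?_
    simp only [F]
    split_ifs
    · have : Real.exp (-x) ≤ 1 := Real.exp_le_one_iff.2 (by have : 0 < x := hx; linarith)
      linarith
    · exact le_rfl
  have hFi : Integrable (Function.uncurry F) (P.prod (volume.restrict (Ioi 0))) := by
    rw [integrable_prod_iff mF.aestronglyMeasurable]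
    constructor
    · refine ae_of_all _ fun ω => ?_
      have hb : IntegrableOn (fun x : ℝ => 1 - Real.exp (-x)) (Icc ((M - 1) * (r * U ω) + (G + 1) * (r * V ω)) (M * (r * U ω) + G * (r * V ω))) :=
        Continuous.integrableOn_Icc (by fun_prop)
      rw [← integrable_indicator_iff measurableSet_Icc] at hb
      refine (hb.restrict (s := Ioi 0)).mono (mF.comp measurable_prodMk_left).aestronglyMeasurable (ae_of_all _ fun x => ?_)
      simp only [Function.uncurry, F]
      split_ifs with h
      · rw [indicator_of_mem (show x ∈ Icc _ _ from h.2)]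
      · rw [norm_zero]; exact norm_nonneg _
    · refine hh_int.congr (ae_of_all _ fun ω => ?_)
      simp only [Function.uncurry]
      rw [setIntegral_congr_fun measurableSet_Ioi (hF0 ω), hF2 ω]
  have hsw := integral_integral_swap hFi
  simp_rw [hF2, hF1] at hsw
  rw [hsw, ← integral_neg]
  refine integral_congr_ae (ae_of_all _ fun x => ?_)
  simp only
  ring

lemma gauss_half {σ : ℝ} (hσ : 0 < σ) :
    ∫ w in Ioi (0:ℝ), Real.exp (-(w ^ 2) / (2 * σ ^ 2)) / Real.sqrt (2 * Real.pi * σ ^ 2) = 1 / 2 := by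
  rw [integral_div]
  have h := integral_gaussian_Ioi (1 / (2 * σ ^ 2))
  have e : ∀ w : ℝ, -(w ^ 2) / (2 * σ ^ 2) = -(1 / (2 * σ ^ 2)) * w ^ 2 := by intro w; ring
  simp_rw [e]
  rw [h, show Real.pi / (1 / (2 * σ ^ 2)) = 2 * Real.pi * σ ^ 2 by field_simp]
  have : 0 < Real.sqrt (2 * Real.pi * σ ^ 2) := Real.sqrt_pos.2 (by positivity)
  field_simp

lemma gauss_dom {σ t w : ℝ} (hσ : 0 < σ) (ht : t ≤ 1) (hw : 0 ≤ w) :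
    Real.exp (Real.sqrt t * w) * Real.exp (-(w ^ 2) / (2 * σ ^ 2)) ≤ Real.exp (σ ^ 2) * Real.exp (-(1 / (4 * σ ^ 2)) * w ^ 2) := by
  rw [← Real.exp_add, ← Real.exp_add]
  refine Real.exp_le_exp.2 ?_
  have h1 : Real.sqrt t ≤ 1 := Real.sqrt_le_one.2 ht
  have h2 : Real.sqrt t * w ≤ w := mul_le_of_le_one_left hw h1
  have h3 : σ ^ 2 + -(1 / (4 * σ ^ 2)) * w ^ 2 - (w + -(w ^ 2) / (2 * σ ^ 2)) = (w / (2 * σ) - σ) ^ 2 := by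
    field_simp; ring
  nlinarith [sq_nonneg (w / (2 * σ) - σ)]

lemma final_lim (hY : Y ∈ Set.Ioo (1:ℝ) 2) (hU : Measurable U) (hV : Measurable V) (hI : IndepFun U V P)
    (hchar : ∀ u : ℝ, ∫ ω, Complex.exp (Complex.I * u * (U ω)) ∂P = Complex.exp (K * chi Y u)) {M G σ : ℝ}
    (hM : 1 < M) (hG : 0 < G) (hσ : 0 < σ) :
    Filter.Tendsto
      (fun t => t⁻¹ * ∫ w in Set.Ioi (0:ℝ),
        (∫ x in Set.Ioi (0:ℝ), (Real.exp (-x) - 1) *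
          (P {ω | t ^ ((1:ℝ)/2 - 1/Y) * w ≤ U ω - V ω ∧
              (M - 1) * U ω + (G + 1) * V ω ≤ t ^ (-(1/Y)) * x ∧
              t ^ (-(1/Y)) * x ≤ M * U ω + G * V ω}).toReal)
        * Real.exp (Real.sqrt t * w)
        * (Real.exp (-(w ^ 2) / (2 * σ ^ 2)) / Real.sqrt (2 * Real.pi * σ ^ 2)))
      (𝓝[>] (0:ℝ))
      (𝓝 (-(K / 2) * (M ^ Y - (M - 1) ^ Y))) := by
  obtain ⟨D, hD0, hD⟩ := Phi_bound hY hU hchar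
  have hc : 0 < M + G := by linarith
  have hS : 0 < Real.sqrt (2 * Real.pi * σ ^ 2) := Real.sqrt_pos.2 (by positivity)
  have h1 : Tendsto (fun t : ℝ => ∫ w in Ioi (0:ℝ),
      (t⁻¹ * ∫ ω, hh M G (Real.sqrt t * w) (t ^ (1 / Y) * U ω) (t ^ (1 / Y) * V ω) ∂P) * Real.exp (Real.sqrt t * w)
        * (Real.exp (-(w ^ 2) / (2 * σ ^ 2)) / Real.sqrt (2 * Real.pi * σ ^ 2))) (𝓝[>] 0)
      (𝓝 (∫ w in Ioi (0:ℝ), (K * (M ^ Y - (M - 1) ^ Y)) * 1 * (Real.exp (-(w ^ 2) / (2 * σ ^ 2)) / Real.sqrt (2 * Real.pi * σ ^ 2)))) := by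
    refine tendsto_integral_filter_of_dominated_convergence
      (fun w => D * (M + G) ^ Y / Real.sqrt (2 * Real.pi * σ ^ 2) * (Real.exp (σ ^ 2) * Real.exp (-(1 / (4 * σ ^ 2)) * w ^ 2))) ?_ ?_ ?_ ?_
    · refine Eventually.of_forall fun t => Measurable.aestronglyMeasurable ?_
      have hm : Measurable (fun z : Ω × ℝ => hh M G (Real.sqrt t * z.2) (t ^ (1 / Y) * U z.1) (t ^ (1 / Y) * V z.1)) :=
        (hh_meas M G).comp (f := fun z : Ω × ℝ => (Real.sqrt t * z.2, t ^ (1 / Y) * U z.1, t ^ (1 / Y) * V z.1)) (by fun_prop)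
      have h2 : Measurable (fun w : ℝ => ∫ ω, hh M G (Real.sqrt t * w) (t ^ (1 / Y) * U ω) (t ^ (1 / Y) * V ω) ∂P) :=
        (hm.stronglyMeasurable.integral_prod_left' (μ := P)).measurable
      fun_prop
    · filter_upwards [Ioo_mem_nhdsGT (zero_lt_one (α := ℝ))] with t ht
      filter_upwards [ae_restrict_mem measurableSet_Ioi] with w hw
      have hw' : 0 < w := hw
      have ht0 := ht.1
      have hs : 0 ≤ Real.sqrt t * w := by positivity
      have b0 : 0 ≤ ∫ ω, hh M G (Real.sqrt t * w) (t ^ (1 / Y) * U ω) (t ^ (1 / Y) * V ω) ∂P :=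
        integral_nonneg fun ω => (hh_bounds hG hs _ _).1
      have b1 : ∫ ω, hh M G (Real.sqrt t * w) (t ^ (1 / Y) * U ω) (t ^ (1 / Y) * V ω) ∂P ≤ ∫ ω, phi ((M + G) * (t ^ (1 / Y) * U ω)) ∂P :=
        integral_mono (hh_integrable hY hU hV hchar hM hG hs t ht0) (phi_int' hY hU hchar _ hc t ht0) fun ω => (hh_bounds hG hs _ _).2
      have b2 := (mul_le_mul_of_nonneg_left b1 (inv_pos.2 ht0).le).trans (phi_scale_bound hY hD _ hc t ht0)
      have b3 := gauss_dom hσ ht.2.le hw'.le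
      rw [Real.norm_of_nonneg (by positivity)]
      calc _ = (t⁻¹ * ∫ ω, hh M G (Real.sqrt t * w) (t ^ (1 / Y) * U ω) (t ^ (1 / Y) * V ω) ∂P) / Real.sqrt (2 * Real.pi * σ ^ 2) *
            (Real.exp (Real.sqrt t * w) * Real.exp (-(w ^ 2) / (2 * σ ^ 2))) := by ring
        _ ≤ _ := by gcongr
    · exact (((integrable_exp_neg_mul_sq (by positivity : 0 < 1 / (4 * σ ^ 2))).const_mul _).const_mul _).integrableOn
    · filter_upwards [ae_restrict_mem measurableSet_Ioi] with w hw
      have hw' : 0 < w := hw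
      refine ((h_lim hY hU hV hI hchar hM hG hw'.le).mul ?_).mul_const _
      have : Continuous (fun t : ℝ => Real.exp (Real.sqrt t * w)) := by fun_prop
      simpa using (this.tendsto 0).mono_left (nhdsWithin_le_nhds (s := Ioi 0))
  rw [integral_const_mul, gauss_half hσ] at h1
  have h2 := h1.neg
  rw [show -(K * (M ^ Y - (M - 1) ^ Y) * 1 * (1 / 2)) = -(K / 2) * (M ^ Y - (M - 1) ^ Y) by ring] at h2
  refine h2.congr' ?_
  filter_upwards [self_mem_nhdsWithin] with t ht
  rw [← integral_const_mul, ← integral_neg]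
  refine setIntegral_congr_fun measurableSet_Ioi fun w hw => ?_
  have hw' : 0 < w := hw
  rw [inner_fub hY hU hV hchar hM hG ht hw'.le]
  ring

end

/-- Limit of the Gaussian-averaged double integral (display (ExpAsyJ332)). -/
theorem stmt16
    {Ω : Type} [MeasurableSpace Ω] (P : Measure Ω) [IsProbabilityMeasure P]
    (Y C M G σ : ℝ) (hY : Y ∈ Set.Ioo (1:ℝ) 2) (hC : 0 < C) (hM : 1 < M) (hG : 0 < G)
    (hσ : 0 < σ)
    (U V : Ω → ℝ) (hU : Measurable U) (hV : Measurable V)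
    (hIndep : IndepFun U V P)
    (hUchar : ∀ u : ℝ, (∫ ω, Complex.exp (Complex.I * u * (U ω)) ∂P) =
      Complex.exp (((C * Real.Gamma (-Y) * |u| ^ Y : ℝ) : ℂ) *
        (((Real.cos (Real.pi * Y / 2) : ℝ) : ℂ)
          - Complex.I * ((Real.sign u : ℝ) : ℂ) * ((Real.sin (Real.pi * Y / 2) : ℝ) : ℂ))))
    (hVchar : ∀ u : ℝ, (∫ ω, Complex.exp (Complex.I * u * (V ω)) ∂P) =
      Complex.exp (((C * Real.Gamma (-Y) * |u| ^ Y : ℝ) : ℂ) *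
        (((Real.cos (Real.pi * Y / 2) : ℝ) : ℂ)
          - Complex.I * ((Real.sign u : ℝ) : ℂ) * ((Real.sin (Real.pi * Y / 2) : ℝ) : ℂ)))) :
    Filter.Tendsto
      (fun t => t⁻¹ * ∫ w in Set.Ioi (0:ℝ),
        (∫ x in Set.Ioi (0:ℝ), (Real.exp (-x) - 1) *
          (P {ω | t ^ ((1:ℝ)/2 - 1/Y) * w ≤ U ω - V ω ∧
              (M - 1) * U ω + (G + 1) * V ω ≤ t ^ (-(1/Y)) * x ∧
              t ^ (-(1/Y)) * x ≤ M * U ω + G * V ω}).toReal)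
        * Real.exp (Real.sqrt t * w)
        * (Real.exp (-(w ^ 2) / (2 * σ ^ 2)) / Real.sqrt (2 * Real.pi * σ ^ 2)))
      (𝓝[>] (0:ℝ))
      (𝓝 (-(C * Real.Gamma (-Y) / 2) * (M ^ Y - (M - 1) ^ Y))) := by
  refine final_lim hY hU hV hIndep (K := C * Real.Gamma (-Y)) (fun u => ?_) hM hG hσ
  rw [hUchar u]
  congr 1
  unfold chi
  push_cast
  ring
end

section
/- Laplace transform of the centered one-sided stable law (underlying display (expUt)): let U be a real random variable whose characteristic function is u ↦ exp(C·Γ(−Y)·|u|^Y·(cos(πY/2) − i·sign(u)·sin(πY/2))). Then for every λ ≥ 0, E[e^{−λ·U}] = exp(C·Γ(−Y)·λ^Y). -/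
open MeasureTheory Filter Topology Set

lemma contour_shift (f : ℂ → ℂ) (l A b : ℝ) (hl : 0 ≤ l) (hb : 0 < b)
    (hc : ContinuousOn f {z | 0 ≤ z.re ∧ z.re ≤ l})
    (hd : ∀ z : ℂ, 0 < z.re → DifferentiableAt ℂ f z)
    (hA : ∀ x t : ℝ, 0 ≤ x → x ≤ l → ‖f (x + t * Complex.I)‖ ≤ A * Real.exp (-b * t ^ 2)) :
    ∫ t : ℝ, f (t * Complex.I) = ∫ t : ℝ, f (l + t * Complex.I) := by
  have hcl : ∀ x : ℝ, 0 ≤ x → x ≤ l → Continuous fun t : ℝ => f (x + t * Complex.I) := by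
    intro x h0 h1
    refine hc.comp_continuous (by fun_prop) ?_
    intro t
    simp [h0, h1]
  have hinteg : ∀ x : ℝ, 0 ≤ x → x ≤ l → Integrable fun t : ℝ => f (x + t * Complex.I) := by
    intro x h0 h1
    refine ((integrable_exp_neg_mul_sq hb).const_mul A).mono' (hcl x h0 h1).aestronglyMeasurable ?_
    exact Eventually.of_forall fun t => hA x t h0 h1
  have lim : ∀ x : ℝ, 0 ≤ x → x ≤ l → Tendsto (fun n : ℕ => ∫ t in (-(n:ℝ))..n, f (x + t * Complex.I))
      atTop (𝓝 (∫ t : ℝ, f (x + t * Complex.I))) := by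
    intro x h0 h1
    exact intervalIntegral_tendsto_integral (hinteg x h0 h1)
      (tendsto_neg_atTop_atBot.comp tendsto_natCast_atTop_atTop) tendsto_natCast_atTop_atTop
  have hor : ∀ s : ℕ → ℝ, (∀ n, s n ^ 2 = (n:ℝ) ^ 2) →
      Tendsto (fun n : ℕ => ∫ x in (0:ℝ)..l, f (x + s n * Complex.I)) atTop (𝓝 0) := by
    intro s hs
    have h0 : Tendsto (fun n : ℕ => A * Real.exp (-b * (n:ℝ) ^ 2) * |l - 0|) atTop (𝓝 0) := by
      have : Tendsto (fun n : ℕ => Real.exp (-b * (n:ℝ) ^ 2)) atTop (𝓝 0) := by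
        refine Real.tendsto_exp_atBot.comp ?_
        refine Tendsto.const_mul_atTop_of_neg (by linarith) ?_
        exact (tendsto_pow_atTop two_ne_zero).comp tendsto_natCast_atTop_atTop
      simpa using (this.const_mul A).mul_const |l - 0|
    refine squeeze_zero_norm (fun n => ?_) h0
    refine intervalIntegral.norm_integral_le_of_norm_le_const ?_
    intro x hx
    rw [uIoc_of_le hl] at hx
    rw [← hs n]
    exact hA x (s n) hx.1.le hx.2
  have h1 := hor (fun n => -(n:ℝ)) (by simp)
  have h2 := hor (fun n => (n:ℝ)) (by simp)
  have h3 := lim 0 le_rfl hl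
  have h4 := lim l hl le_rfl
  have key : ∀ n : ℕ, (∫ t in (-(n:ℝ))..n, f ((0:ℝ) + t * Complex.I)) =
      (∫ t in (-(n:ℝ))..n, f (l + t * Complex.I)) +
      (-Complex.I) * ((∫ x in (0:ℝ)..l, f (x + (-(n:ℝ) : ℝ) * Complex.I)) -
        ∫ x in (0:ℝ)..l, f (x + (n:ℝ) * Complex.I)) := by
    intro n
    have := Complex.integral_boundary_rect_eq_zero_of_continuousOn_of_differentiableOn f
      (⟨0, -(n:ℝ)⟩ : ℂ) (⟨l, n⟩ : ℂ) (hc.mono ?_) ?_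
    · simp only [smul_eq_mul] at this
      linear_combination (Complex.I) * this + (-(∫ t in (-(n:ℝ))..n, f ((0:ℝ) + t * Complex.I)) + (∫ t in (-(n:ℝ))..n, f (l + t * Complex.I))) * (- Complex.I_sq)
    · intro z hz
      have := hz.1
      simpa [uIcc_of_le hl] using this
    · intro z hz
      have := hz.1
      simp [hl] at this
      exact (hd z this.1).differentiableWithinAt
  have h5 := h4.add ((h1.sub h2).const_mul (-Complex.I))
  have := tendsto_nhds_unique (h3.congr key) h5
  simpa using this

lemma re_cpow_le (Y l : ℝ) (hY : Y ∈ Set.Ioo (1:ℝ) 2) (z : ℂ) (h0 : 0 ≤ z.re) (h1 : z.re ≤ l) :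
    (z ^ (Y : ℂ)).re ≤ (l / Real.cos (Real.pi / (2 * Y))) ^ Y := by
  obtain ⟨hY1, hY2⟩ := hY
  have hY0 : 0 < Y := by linarith
  have hpi := Real.pi_pos
  have hlt : Real.pi / (2 * Y) < Real.pi / 2 := by
    apply div_lt_div_of_pos_left hpi <;> linarith
  have hp0 : 0 < Real.pi / (2 * Y) := by positivity
  have hc : 0 < Real.cos (Real.pi / (2 * Y)) :=
    Real.cos_pos_of_mem_Ioo ⟨by linarith, hlt⟩
  have hl : 0 ≤ l := h0.trans h1
  have hre : (z ^ (Y : ℂ)).re = ‖z‖ ^ Y * Real.cos (z.arg * Y) := by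
    rw [Complex.cpow_ofReal_re]
  rw [hre]
  have harg : |z.arg| ≤ Real.pi / 2 := Complex.abs_arg_le_pi_div_two_iff.2 h0
  by_cases hcos : |z.arg| ≤ Real.pi / (2 * Y)
  · have h2 : ‖z‖ * Real.cos (Real.pi / (2 * Y)) ≤ l := by
      calc ‖z‖ * Real.cos (Real.pi / (2 * Y)) ≤ ‖z‖ * Real.cos z.arg := by
            gcongr
            rw [← Real.cos_abs z.arg]
            exact Real.cos_le_cos_of_nonneg_of_le_pi (abs_nonneg _) (by linarith) hcos
        _ = z.re := by rw [Complex.norm_mul_cos_arg]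
        _ ≤ l := h1
    calc ‖z‖ ^ Y * Real.cos (z.arg * Y) ≤ ‖z‖ ^ Y * 1 := by
          gcongr
          exact Real.cos_le_one _
      _ ≤ _ := by
          rw [mul_one]
          gcongr
          rwa [le_div_iff₀ hc]
  · push Not at hcos
    have h3 : Real.cos (z.arg * Y) ≤ 0 := by
      rw [← Real.cos_abs, abs_mul, abs_of_pos hY0]
      apply Real.cos_nonpos_of_pi_div_two_le_of_le
      · rw [div_lt_iff₀ (by positivity)] at hcos
        linarith
      · nlinarith
    calc _ ≤ (0:ℝ) := mul_nonpos_of_nonneg_of_nonpos (by positivity) h3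
      _ ≤ _ := by positivity

lemma cont_cpow (Y : ℝ) (hY : 0 < Y) (z : ℂ) (hz : 0 ≤ z.re) :
    ContinuousAt (fun z : ℂ => z ^ (Y : ℂ)) z :=
  Complex.continuousAt_cpow_const_of_re_pos (Or.inl hz) (by simpa using hY)

lemma imag_cpow (Y : ℝ) (hY : 0 < Y) (t : ℝ) :
    ((t : ℂ) * Complex.I) ^ (Y : ℂ) = ((|(-t)| ^ Y : ℝ) : ℂ) * (((Real.cos (Real.pi * Y / 2) : ℝ) : ℂ)
          - Complex.I * ((Real.sign (-t) : ℝ) : ℂ) * ((Real.sin (Real.pi * Y / 2) : ℝ) : ℂ)) := by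
  rcases lt_trichotomy t 0 with h | h | h
  · have ha : ((t : ℂ) * Complex.I).arg = -(Real.pi / 2) := by
      rw [Complex.arg_eq_neg_pi_div_two_iff]; simp [h]
    have e : Real.pi * Y / 2 = - (-(Real.pi / 2) * Y) := by ring
    rw [Real.sign_of_pos (by linarith)]
    apply Complex.ext
    · rw [Complex.cpow_ofReal_re, ha, e, Real.cos_neg]; simp [-neg_mul, -mul_neg,-Complex.ofReal_cos, -Complex.ofReal_sin]
    · rw [Complex.cpow_ofReal_im, ha, e, Real.sin_neg]; simp [-neg_mul, -mul_neg,-Complex.ofReal_cos, -Complex.ofReal_sin]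
  · subst h; simp [hY.ne']
  · have ha : ((t : ℂ) * Complex.I).arg = (Real.pi / 2) := by
      rw [Complex.arg_eq_pi_div_two_iff]; simp [h]
    have e : Real.pi * Y / 2 = (Real.pi / 2) * Y := by ring
    rw [Real.sign_of_neg (by linarith)]
    apply Complex.ext
    · rw [Complex.cpow_ofReal_re, ha, e]; simp [-Complex.ofReal_cos, -Complex.ofReal_sin]
    · rw [Complex.cpow_ofReal_im, ha, e]; simp [-Complex.ofReal_cos, -Complex.ofReal_sin]

lemma gauss_step {Ω : Type} [MeasurableSpace Ω] (P : Measure Ω) [IsProbabilityMeasure P]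
    (Y K : ℝ) (hY : Y ∈ Set.Ioo (1:ℝ) 2) (hK : 0 ≤ K)
    (U : Ω → ℝ) (hU : Measurable U)
    (hch : ∀ t : ℝ, (∫ ω, Complex.exp (-(Complex.I * t * (U ω))) ∂P) =
      Complex.exp (K * ((t : ℂ) * Complex.I) ^ (Y : ℂ))) (l N : ℝ) (hl : 0 ≤ l) (hN : 0 < N) :
    (Real.pi / (N:ℂ)^2) ^ (1 / 2 : ℂ) * ((∫ ω, Real.exp (-(l * U ω) - U ω ^ 2 / (4 * N ^ 2)) ∂P : ℝ) : ℂ)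
     = ∫ t : ℝ, Complex.exp (K * (l + (t : ℂ) * Complex.I) ^ (Y : ℂ)) * Real.exp (-N ^ 2 * t ^ 2) := by
  have hY0 : 0 < Y := by linarith [hY.1]
  have hN2 : 0 < N ^ 2 := by positivity
  have hNC : (N : ℂ) ≠ 0 := by exact_mod_cast hN.ne'
  set M := (l / Real.cos (Real.pi / (2 * Y))) ^ Y with hM
  have hs := contour_shift
    (fun z : ℂ => Complex.exp (K * z ^ (Y : ℂ)) * Complex.exp (N ^ 2 * (z - l) ^ 2)) l
    (Real.exp (K * M) * Real.exp (N ^ 2 * l ^ 2)) (N ^ 2) hl hN2 ?_ ?_ ?_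
  · have e2 : (∫ t : ℝ, Complex.exp (K * (l + (t : ℂ) * Complex.I) ^ (Y : ℂ)) * Real.exp (-N ^ 2 * t ^ 2)) =
      ∫ t : ℝ, Complex.exp (K * (l + (t : ℂ) * Complex.I) ^ (Y : ℂ)) *
        Complex.exp (N ^ 2 * (l + (t : ℂ) * Complex.I - l) ^ 2) := by
      congr 1; ext t
      congr 1
      rw [Complex.ofReal_exp]
      congr 1
      push_cast
      linear_combination (-(N:ℂ)^2 * t^2) * Complex.I_sq
    rw [e2, ← hs]
    have e3 : ∀ t : ℝ, Complex.exp (K * ((t : ℂ) * Complex.I) ^ (Y : ℂ)) *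
        Complex.exp (N ^ 2 * ((t : ℂ) * Complex.I - l) ^ 2) =
        ∫ ω, Complex.exp (-(Complex.I * t * (U ω))) * Complex.exp (N ^ 2 * ((t : ℂ) * Complex.I - l) ^ 2) ∂P := by
      intro t
      rw [integral_mul_const, hch]
    simp_rw [e3]
    rw [integral_integral_swap]
    · have e4 : ∀ ω, (∫ t : ℝ, Complex.exp (-(Complex.I * t * (U ω))) *
          Complex.exp (N ^ 2 * ((t : ℂ) * Complex.I - l) ^ 2)) =
          (Real.pi / (N:ℂ)^2) ^ (1 / 2 : ℂ) * ((Real.exp (-(l * U ω) - U ω ^ 2 / (4 * N ^ 2)) : ℝ) : ℂ) := by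
        intro ω
        have hq := integral_cexp_quadratic (b := -(N:ℂ)^2) (by
          rw [← Complex.ofReal_pow, ← Complex.ofReal_neg, Complex.ofReal_re]; linarith) (-(Complex.I * (U ω + 2 * N ^ 2 * l))) (N ^ 2 * l ^ 2)
        rw [neg_neg] at hq
        rw [Complex.ofReal_exp]
        convert hq using 1
        · congr 1; ext t
          rw [← Complex.exp_add]
          congr 1
          linear_combination ((N:ℂ)^2 * t^2) * Complex.I_sq
        · congr 2
          push_cast
          field_simp
          linear_combination (-((U ω : ℂ) + 2 * N ^ 2 * l)^2) * Complex.I_sq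
      simp_rw [e4]
      rw [integral_const_mul, integral_complex_ofReal]
    · have hg : Integrable (fun p : ℝ × Ω => Real.exp (-N ^ 2 * p.1 ^ 2) * Real.exp (N ^ 2 * l ^ 2)) (volume.prod P) :=
        (((integrable_exp_neg_mul_sq hN2).comp_fst P)).mul_const _
      refine hg.mono' ?_ ?_
      · apply Measurable.aestronglyMeasurable
        unfold Function.uncurry
        fun_prop
      · refine Eventually.of_forall fun p => le_of_eq ?_
        simp only [Function.uncurry, norm_mul, Complex.norm_exp]
        rw [← Real.exp_add, ← Real.exp_add]
        congr 1
        simp [pow_two]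
        ring
  · intro z hz
    apply ContinuousAt.continuousWithinAt
    have := cont_cpow Y hY0 z hz.1
    fun_prop
  · intro z hz
    have : DifferentiableAt ℂ (fun z : ℂ => z ^ (Y : ℂ)) z :=
      differentiableAt_id.cpow_const (Or.inl hz)
    fun_prop
  · intro x t h0 h1
    rw [norm_mul, Complex.norm_exp, Complex.norm_exp, mul_assoc, ← Real.exp_add (N ^ 2 * l ^ 2)]
    have h2 := re_cpow_le Y l hY (x + t * Complex.I) (by simpa using h0) (by simpa using h1)
    refine mul_le_mul (Real.exp_le_exp.2 ?_) (Real.exp_le_exp.2 ?_) (Real.exp_pos _).le (Real.exp_pos _).le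
    · rw [Complex.re_ofReal_mul]
      exact mul_le_mul_of_nonneg_left h2 hK
    · have : ((N:ℂ) ^ 2 * ((x:ℂ) + t * Complex.I - l) ^ 2).re = N ^ 2 * ((x - l)^2 - t^2) := by
        rw [← Complex.ofReal_pow, Complex.re_ofReal_mul]
        simp [pow_two]
      rw [this]
      nlinarith [mul_nonneg h0 (by linarith : 0 ≤ 2 * l - x)]

lemma gauss_lim (Y K l : ℝ) (hY : Y ∈ Set.Ioo (1:ℝ) 2) (hK : 0 ≤ K) (hl : 0 ≤ l) :
    Tendsto (fun n : ℕ => ∫ s : ℝ, Complex.exp (K * (l + ((s / ((n:ℝ) + 1) : ℝ) : ℂ) * Complex.I) ^ (Y : ℂ)) *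
      Real.exp (-1 * s ^ 2)) atTop (𝓝 (∫ s : ℝ, Complex.exp (K * (l : ℂ) ^ (Y : ℂ)) * Real.exp (-1 * s ^ 2))) := by
  have hY0 : 0 < Y := by linarith [hY.1]
  set M := (l / Real.cos (Real.pi / (2 * Y))) ^ Y with hM
  have hcont : Continuous fun s : ℝ => Complex.exp (K * (l + (s : ℂ) * Complex.I) ^ (Y : ℂ)) := by
    refine continuous_iff_continuousAt.2 fun s => ?_
    have h1 := cont_cpow Y hY0 (l + (s : ℂ) * Complex.I) (by simpa using hl)
    have h2 : ContinuousAt (fun s : ℝ => (l + (s : ℂ) * Complex.I) ^ (Y : ℂ)) s :=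
      ContinuousAt.comp (f := fun s : ℝ => (l + (s : ℂ) * Complex.I)) h1 (by fun_prop)
    fun_prop
  refine tendsto_integral_of_dominated_convergence
    (fun s => Real.exp (K * M) * Real.exp (-1 * s ^ 2)) ?_ ?_ ?_ ?_
  · intro n
    apply Continuous.aestronglyMeasurable
    have : Continuous fun s : ℝ => s / ((n:ℝ) + 1) := by fun_prop
    exact (hcont.comp this).mul (by fun_prop)
  · exact (integrable_exp_neg_mul_sq one_pos).const_mul _
  · intro n
    refine Eventually.of_forall fun s => ?_
    rw [norm_mul, Complex.norm_exp, Complex.norm_real, Real.norm_eq_abs, Real.abs_exp]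
    have h2 := re_cpow_le Y l hY (l + ((s / ((n:ℝ) + 1) : ℝ) : ℂ) * Complex.I) (by simpa [-Complex.ofReal_div] using hl) (by simp [-Complex.ofReal_div])
    refine mul_le_mul_of_nonneg_right (Real.exp_le_exp.2 ?_) (Real.exp_pos _).le
    rw [Complex.re_ofReal_mul]
    exact mul_le_mul_of_nonneg_left h2 hK
  · refine Eventually.of_forall fun s => Tendsto.mul_const _ ?_
    have h1 : Tendsto (fun n : ℕ => s / ((n:ℝ) + 1)) atTop (𝓝 0) :=
      tendsto_const_nhds.div_atTop (tendsto_atTop_add_const_right _ _ tendsto_natCast_atTop_atTop)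
    have := (hcont.tendsto 0).comp h1
    simpa [Function.comp_def] using this

theorem stmt17
    {Ω : Type} [MeasurableSpace Ω] (P : Measure Ω) [IsProbabilityMeasure P]
    (Y C : ℝ) (hY : Y ∈ Set.Ioo (1:ℝ) 2) (hC : 0 < C)
    (U : Ω → ℝ) (hU : Measurable U)
    (hUchar : ∀ u : ℝ, (∫ ω, Complex.exp (Complex.I * u * (U ω)) ∂P) =
      Complex.exp (((C * Real.Gamma (-Y) * |u| ^ Y : ℝ) : ℂ) *
        (((Real.cos (Real.pi * Y / 2) : ℝ) : ℂ)
          - Complex.I * ((Real.sign u : ℝ) : ℂ) * ((Real.sin (Real.pi * Y / 2) : ℝ) : ℂ)))) :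
    ∀ lam ≥ (0:ℝ),
      (∫ ω, Real.exp (-(lam * U ω)) ∂P) = Real.exp (C * Real.Gamma (-Y) * lam ^ Y) := by
  intro l hl
  have hY0 : 0 < Y := by linarith [hY.1]
  have hG : 0 < Real.Gamma (-Y) := by
    have h1 := Real.Gamma_add_one (s := -Y) (by linarith)
    have h2 := Real.Gamma_add_one (s := -Y + 1) (by linarith [hY.1])
    have h3 : 0 < Real.Gamma (-Y + 1 + 1) := Real.Gamma_pos_of_pos (by linarith [hY.2])
    rw [h2, h1, ← mul_assoc] at h3
    refine (pos_iff_pos_of_mul_pos h3).1 ?_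
    nlinarith [hY.1]
  set K := C * Real.Gamma (-Y) with hKdef
  have hK : 0 ≤ K := by positivity
  have hch : ∀ t : ℝ, (∫ ω, Complex.exp (-(Complex.I * t * (U ω))) ∂P) =
      Complex.exp (K * ((t : ℂ) * Complex.I) ^ (Y : ℂ)) := by
    intro t
    have := hUchar (-t)
    rw [imag_cpow Y hY0, ← mul_assoc, ← Complex.ofReal_mul, ← this]
    simp
  let m : ℕ → ℝ := fun n => ∫ ω, Real.exp (-(l * U ω) - U ω ^ 2 / (4 * ((n:ℝ) + 1) ^ 2)) ∂P
  have hm : ∀ n : ℕ, ((Real.pi : ℂ) ^ (1 / 2 : ℂ)) * (m n : ℂ) =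
      ∫ s : ℝ, Complex.exp (K * (l + ((s / ((n:ℝ) + 1) : ℝ) : ℂ) * Complex.I) ^ (Y : ℂ)) *
      Real.exp (-1 * s ^ 2) := by
    intro n
    have hN : (0:ℝ) < (n:ℝ) + 1 := by positivity
    have h1 := gauss_step P Y K hY hK U hU hch l ((n:ℝ) + 1) hl hN
    have h2 := Measure.integral_comp_div (fun t : ℝ => Complex.exp (K * (l + (t : ℂ) * Complex.I) ^ (Y : ℂ)) * Real.exp (-((n:ℝ)+1) ^ 2 * t ^ 2)) ((n:ℝ) + 1)
    rw [← h1, abs_of_pos hN] at h2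
    have h3 : (Real.pi / ((((n:ℝ) + 1 : ℝ) : ℂ))^2) ^ (1 / 2 : ℂ) = (Real.pi : ℂ) ^ (1 / 2 : ℂ) / (((n:ℝ) + 1 : ℝ) : ℂ) := by
      rw [← Complex.ofReal_pow, ← Complex.ofReal_div]
      have : (1/2 : ℂ) = ((1/2 : ℝ) : ℂ) := by norm_num
      rw [this, ← Complex.ofReal_cpow (by positivity), ← Complex.ofReal_cpow Real.pi_pos.le, ← Complex.ofReal_div,
        Real.div_rpow Real.pi_pos.le (by positivity), ← Real.sqrt_eq_rpow, ← Real.sqrt_eq_rpow, Real.sqrt_sq hN.le]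
    rw [h3] at h2
    have hNC : ((((n:ℝ) + 1 : ℝ)) : ℂ) ≠ 0 := by exact_mod_cast hN.ne'
    rw [Complex.real_smul, ← mul_assoc, mul_div_cancel₀ _ hNC] at h2
    rw [← h2]
    congr 1; ext s
    congr 3
    field_simp
  have hpi : (Real.pi : ℂ) ^ (1 / 2 : ℂ) ≠ 0 := by
    simp [Complex.cpow_eq_zero_iff, Real.pi_ne_zero]
  have hconst : (∫ s : ℝ, Complex.exp (K * (l : ℂ) ^ (Y : ℂ)) * Real.exp (-1 * s ^ 2)) =
      (Real.pi : ℂ) ^ (1 / 2 : ℂ) * ((Real.exp (K * l ^ Y) : ℝ) : ℂ) := by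
    rw [integral_const_mul, integral_complex_ofReal, integral_gaussian, div_one, Real.sqrt_eq_rpow,
      Complex.ofReal_cpow Real.pi_pos.le, Complex.ofReal_exp, Complex.ofReal_mul K, Complex.ofReal_cpow hl, mul_comm]
    norm_num
  have hlimC : Tendsto (fun n => (m n : ℂ)) atTop (𝓝 ((Real.exp (K * l ^ Y) : ℝ) : ℂ)) := by
    have h := gauss_lim Y K l hY hK hl
    rw [hconst] at h
    have h := (h.congr (fun n => (hm n).symm)).const_mul ((Real.pi : ℂ) ^ (1 / 2 : ℂ))⁻¹
    simpa only [inv_mul_cancel_left₀ hpi] using h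
  have hlim : Tendsto m atTop (𝓝 (Real.exp (K * l ^ Y))) := by
    have := (Complex.continuous_re.tendsto _).comp hlimC
    simpa [Function.comp_def, -Complex.ofReal_exp] using this
  -- monotone convergence
  have hinteg : ∀ n : ℕ, Integrable (fun ω => Real.exp (-(l * U ω) - U ω ^ 2 / (4 * ((n:ℝ) + 1) ^ 2))) P := by
    intro n
    refine (integrable_const (Real.exp (l ^ 2 * ((n:ℝ)+1)^2))).mono' (by fun_prop) ?_
    refine Eventually.of_forall fun ω => ?_
    rw [Real.norm_eq_abs, Real.abs_exp]
    gcongr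
    have hN : (0:ℝ) < (n:ℝ) + 1 := by positivity
    have : l ^ 2 * ((n:ℝ)+1)^2 - (-(l * U ω) - U ω ^ 2 / (4 * ((n:ℝ) + 1) ^ 2)) =
      (l * ((n:ℝ)+1) + U ω / (2 * ((n:ℝ)+1)))^2 := by
      field_simp
      ring
    nlinarith [sq_nonneg (l * ((n:ℝ)+1) + U ω / (2 * ((n:ℝ)+1)))]
  have hmono := lintegral_tendsto_of_tendsto_of_monotone (μ := P)
    (f := fun (n : ℕ) ω => ENNReal.ofReal (Real.exp (-(l * U ω) - U ω ^ 2 / (4 * ((n:ℝ) + 1) ^ 2))))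
    (F := fun ω => ENNReal.ofReal (Real.exp (-(l * U ω)))) (by intro n; fun_prop) ?_ ?_
  · have h1 : ∀ n : ℕ, ∫⁻ ω, ENNReal.ofReal (Real.exp (-(l * U ω) - U ω ^ 2 / (4 * ((n:ℝ) + 1) ^ 2))) ∂P
        = ENNReal.ofReal (m n) := fun n =>
      (ofReal_integral_eq_lintegral_ofReal (hinteg n) (Eventually.of_forall fun ω => (Real.exp_pos _).le)).symm
    have h2 := tendsto_nhds_unique (hmono.congr h1) (ENNReal.tendsto_ofReal hlim)
    rw [integral_eq_lintegral_of_nonneg_ae (Eventually.of_forall fun ω => (Real.exp_pos _).le) (by fun_prop), h2,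
      ENNReal.toReal_ofReal (Real.exp_pos _).le]
  · refine Eventually.of_forall fun ω => ?_
    intro a b hab
    dsimp only
    have : (a:ℝ) ≤ b := by exact_mod_cast hab
    gcongr
  · refine Eventually.of_forall fun ω => ?_
    refine ENNReal.tendsto_ofReal ((Real.continuous_exp.tendsto _).comp ?_)
    have h0 : Tendsto (fun n : ℕ => U ω ^ 2 / (4 * ((n:ℝ) + 1) ^ 2)) atTop (𝓝 0) := by
      refine tendsto_const_nhds.div_atTop ?_
      refine Tendsto.const_mul_atTop (by norm_num) ?_
      exact (tendsto_pow_atTop two_ne_zero).comp (tendsto_atTop_add_const_right _ _ tendsto_natCast_atTop_atTop)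
    simpa using (tendsto_const_nhds (x := -(l * U ω))).sub h0
end
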